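/- For all 1 ≤ i₁, i₂ ≤ n²/2 and j₁, j₂ ∈ {0,1}, every indecomposable direct summand of the left u-module S_{2i₁,j₁}⊗S_{2i₂,j₂} is either a simple u-module or a projective u-module. -/

import Mathlib

noncomputable section

open scoped TensorProduct

namespace QFL

/-- The defining relations of the quasi-Frobenius-Lusztig kernel `ũ_q(sl₂)`,
on the free algebra on four generators `K = ι 0`, `K̂ = ι 1`, `E = ι 2`, `F = ι 3`. -/
inductive Rel (k : Type) [Field k] (n : ℕ) (q : k) :
    FreeAlgebra k (Fin 4) → FreeAlgebra k (Fin 4) → Prop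
  | Kord : Rel k n q (FreeAlgebra.ι k (0 : Fin 4) ^ n) 1
  | Khord : Rel k n q (FreeAlgebra.ι k (1 : Fin 4) ^ n)
      ((FreeAlgebra.ι k (0 : Fin 4) ^ (n - 1)) ^ 2)
  | KKh : Rel k n q (FreeAlgebra.ι k (0 : Fin 4) * FreeAlgebra.ι k (1 : Fin 4))
      (FreeAlgebra.ι k (1 : Fin 4) * FreeAlgebra.ι k (0 : Fin 4))
  | KE : Rel k n q
      (FreeAlgebra.ι k (0 : Fin 4) * FreeAlgebra.ι k (2 : Fin 4) *
        FreeAlgebra.ι k (0 : Fin 4) ^ (n - 1))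
      (q ^ n • FreeAlgebra.ι k (2 : Fin 4))
  | KF : Rel k n q
      (FreeAlgebra.ι k (0 : Fin 4) * FreeAlgebra.ι k (3 : Fin 4) *
        FreeAlgebra.ι k (0 : Fin 4) ^ (n - 1))
      ((q ^ n)⁻¹ • FreeAlgebra.ι k (3 : Fin 4))
  | KhE : Rel k n q
      (FreeAlgebra.ι k (1 : Fin 4) * FreeAlgebra.ι k (2 : Fin 4) *
        FreeAlgebra.ι k (1 : Fin 4) ^ (n ^ 2 - 1))
      ((q ^ n * (q ^ 2)⁻¹) • FreeAlgebra.ι k (2 : Fin 4))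
  | KhF : Rel k n q
      (FreeAlgebra.ι k (1 : Fin 4) * FreeAlgebra.ι k (3 : Fin 4) *
        FreeAlgebra.ι k (1 : Fin 4) ^ (n ^ 2 - 1))
      (((q ^ n)⁻¹ * q ^ 2) • FreeAlgebra.ι k (3 : Fin 4))
  | Enil : Rel k n q (FreeAlgebra.ι k (2 : Fin 4) ^ n ^ 2) 0
  | Fnil : Rel k n q (FreeAlgebra.ι k (3 : Fin 4) ^ n ^ 2) 0
  | EF : Rel k n q
      (FreeAlgebra.ι k (3 : Fin 4) * FreeAlgebra.ι k (2 : Fin 4) -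
        q⁻¹ • (FreeAlgebra.ι k (2 : Fin 4) * FreeAlgebra.ι k (3 : Fin 4)))
      (1 - FreeAlgebra.ι k (0 : Fin 4) ^ (n - 1) * FreeAlgebra.ι k (1 : Fin 4))

/-- The algebra `ũ_q(sl₂)` as the quotient of the free algebra by the defining relations. -/
abbrev U (k : Type) [Field k] (n : ℕ) (q : k) := RingQuot (Rel k n q)

variable (k : Type) [Field k] (n : ℕ) (q : k)

def K : U k n q := RingQuot.mkAlgHom k (Rel k n q) (FreeAlgebra.ι k (0 : Fin 4))
def Kh : U k n q := RingQuot.mkAlgHom k (Rel k n q) (FreeAlgebra.ι k (1 : Fin 4))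
def E : U k n q := RingQuot.mkAlgHom k (Rel k n q) (FreeAlgebra.ι k (2 : Fin 4))
def F : U k n q := RingQuot.mkAlgHom k (Rel k n q) (FreeAlgebra.ι k (3 : Fin 4))

/-- `K⁻¹ = K^(n-1)`. -/
def Kinv : U k n q := K k n q ^ (n - 1)
/-- `K̂⁻¹ = K̂^(n²-1)`. -/
def Khinv : U k n q := Kh k n q ^ (n ^ 2 - 1)

/-- `φ_{2i} = (2/n²) Σ_{t<n²/2} q^{-2it} (K⁻¹K̂)^t`. -/
def phi (i : ℕ) : U k n q :=
  ((n ^ 2 : k)⁻¹ * 2) • ∑ t ∈ Finset.range (n ^ 2 / 2),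
    (q⁻¹ ^ (2 * i * t)) • (Kinv k n q * Kh k n q) ^ t

/-- `𝟙₀ = (1/2)(1 + KK̂^(n/2))` and `𝟙₁ = (1/2)(1 - KK̂^(n/2))`. -/
def oneJ (j : ℕ) : U k n q :=
  if j = 0 then (2 : k)⁻¹ • (1 + K k n q * Kh k n q ^ (n / 2))
  else (2 : k)⁻¹ • (1 - K k n q * Kh k n q ^ (n / 2))

/-- The idempotent `e_{2i,j} = φ_{2i} 𝟙_j`. -/
def eIdem (i j : ℕ) : U k n q := phi k n q i * oneJ k n q j

/-- `α_{2i,j} = F^(n²-1) e_{2i,j}`. -/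
def alpha (i j : ℕ) : U k n q := F k n q ^ (n ^ 2 - 1) * eIdem k n q i j

/-- `β_{2i,j} = E^(2i-2) α_{2i,j}`. -/
def beta (i j : ℕ) : U k n q := E k n q ^ (2 * i - 2) * alpha k n q i j

/-- The Gaussian number `s_q = 1 + q + ⋯ + q^(s-1)`. -/
def gauss (x : k) (s : ℕ) : k := ∑ t ∈ Finset.range s, x ^ t

/-- The span of the PBW-type monomials `F^a K^c K̂^d E^b` with `a ≤ n²-2`, `b ≤ n²-1`,
`c ≤ n-1`, `d ≤ n²-1`. -/
def pbw : Submodule k (U k n q) :=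
  Submodule.span k {x | ∃ a b c d : ℕ, a ≤ n ^ 2 - 2 ∧ b ≤ n ^ 2 - 1 ∧ c ≤ n - 1 ∧
    d ≤ n ^ 2 - 1 ∧ x = F k n q ^ a * K k n q ^ c * Kh k n q ^ d * E k n q ^ b}

/-- `γ_{2i,j}`: the unique element of the PBW span with `F·γ = β_{2i,j}`. -/
def gam (i j : ℕ) : U k n q :=
  @dite _ (∃! x, x ∈ pbw k n q ∧ F k n q * x = beta k n q i j)
    (Classical.propDecidable _) (fun h => h.choose) (fun _ => 0)

/-- The left ideal `P_{2i,j} = u·γ_{2i,j}`. -/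
def P (i j : ℕ) : Submodule (U k n q) (U k n q) :=
  Submodule.span (U k n q) {gam k n q i j}

/-- `S_{2i,j} = Soc(P_{2i,j})`, the sum of all simple submodules of `P_{2i,j}`. -/
def S (i j : ℕ) : Submodule (U k n q) (U k n q) :=
  sSup {N : Submodule (U k n q) (U k n q) | N ≤ P k n q i j ∧ IsSimpleModule (U k n q) N}

end QFL

namespace QFL

variable (k : Type) [Field k] (n : ℕ) (q : k)

/-- `1_r = (1/n) Σ_{t<n} q̄^{(n-r)t} K^t`. -/
def oneIdem (r : ℕ) : U k n q :=
  (n : k)⁻¹ • ∑ t ∈ Finset.range n, ((q ^ n) ^ ((n - r) * t)) • K k n q ^ t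

/-- `♭ = Σ_{r<n} q^{-r} 1_r` (an invertible element of `u`). -/
def flat : U k n q := ∑ r ∈ Finset.range n, (q⁻¹ ^ r) • oneIdem k n q r

/-- The property that `Δ` is the comultiplication of `ũ_q(sl₂)` (which exists and is the
unique algebra map with these values on the generators). -/
def IsComul (Δ : U k n q →ₐ[k] (U k n q ⊗[k] U k n q)) : Prop :=
  Δ (K k n q) = K k n q ⊗ₜ[k] K k n q ∧
  Δ (Kh k n q) = Kh k n q ⊗ₜ[k] Kh k n q ∧
  Δ (E k n q) = (E k n q ⊗ₜ[k] Ring.inverse (flat k n q)) +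
    (Kinv k n q ⊗ₜ[k] (oneIdem k n q 0 * E k n q)) +
    ((1 : U k n q) ⊗ₜ[k] ((∑ r ∈ Finset.Icc 1 (n - 1), oneIdem k n q r) * E k n q)) ∧
  Δ (F k n q) = (F k n q ⊗ₜ[k] flat k n q) +
    ((Kinv k n q * Kh k n q) ⊗ₜ[k]
      (F k n q * ∑ r ∈ Finset.Icc 1 (n - 1), oneIdem k n q r)) +
    (Kh k n q ⊗ₜ[k] (F k n q * oneIdem k n q 0))

instance (N : Submodule (U k n q) (U k n q)) : SMulCommClass (U k n q) k N := by
  constructor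
  intro a b m
  ext
  show a • b • (m : U k n q) = b • a • (m : U k n q)
  rw [smul_comm]

/-- The `u`-module structure on `M ⊗[k] N` obtained from left `u`-modules `M`, `N` by letting
`u` act through the comultiplication `Δ`. -/
def tensorModule (Δ : U k n q →ₐ[k] (U k n q ⊗[k] U k n q))
    (M N : Type) [AddCommGroup M] [Module k M] [Module (U k n q) M]
    [IsScalarTower k (U k n q) M] [SMulCommClass (U k n q) k M]
    [AddCommGroup N] [Module k N] [Module (U k n q) N]
    [IsScalarTower k (U k n q) N] [SMulCommClass (U k n q) k N] :
    Module (U k n q) (M ⊗[k] N) :=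
  Module.compHom (M ⊗[k] N)
    ((Module.endTensorEndAlgHom (R := k) (S := k) (A := k) (M := M) (N := N)).comp
      ((Algebra.TensorProduct.map (Algebra.lsmul k k M) (Algebra.lsmul k k N)).comp
        Δ)).toRingHom

end QFL

namespace QFL

/-- Abstract presentation of the relations that are used. -/
structure Alg (k : Type) {R : Type} [Field k] [Ring R] [Algebra k R] (N : ℕ) (q qb : k)
    (K G E F : R) : Prop where
  prim : IsPrimitiveRoot q N
  N4 : 4 ∣ N
  N0 : 0 < N
  qb0 : qb ≠ 0
  KG : K * G = G * K
  KE : K * E = qb • (E * K)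
  KF : K * F = qb⁻¹ • (F * K)
  GE : G * E = (q ^ 2)⁻¹ • (E * G)
  GF : G * F = q ^ 2 • (F * G)
  EN : E ^ N = 0
  FN : F ^ N = 0
  FE : F * E = q⁻¹ • (E * F) + 1 - G
  KN : K ^ N = 1
  GN : G ^ N = 1
  gen : ∀ S : Subalgebra k R, K ∈ S → G ∈ S → E ∈ S → F ∈ S → S = ⊤

/-- weight vectors -/
def Wt {k R M : Type} [SMul k M] [SMul R M] (K G : R) (κ l : k) (v : M) : Prop :=
  K • v = κ • v ∧ G • v = l • v

/-- The coefficient in `F E^m w = cc m E^(m-1) w`. -/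
def cc {k : Type} [Field k] (q l : k) : ℕ → k
  | 0 => 0
  | m + 1 => q⁻¹ * cc q l m + 1 - (q ^ 2)⁻¹ ^ m * l

/-- Chains for the nilpotent operator `F`. -/
def Chain (k : Type) {R M : Type} [Field k] [Ring R] [AddCommGroup M] [Module k M] [Module R M]
    (F : R) (x : ℕ → M) (len : ℕ) : Prop :=
  F • x 0 = 0 ∧ ∀ j, j + 1 < len → ∃ c : k, c ≠ 0 ∧ F ^ (j + 1) • x (j + 1) = c • F ^ j • x j

set_option linter.unusedSectionVars false

section
variable {k R M : Type} [Field k] [Ring R] [Algebra k R] [AddCommGroup M] [Module k M]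
  [Module R M] [IsScalarTower k R M]

theorem Chain.exists {F : R} {x : ℕ → M} {len : ℕ} (h : Chain k F x len) :
    ∀ j, j < len → ∃ c : k, c ≠ 0 ∧ F ^ j • x j = c • x 0 := by
  intro j
  induction j with
  | zero => intro _; exact ⟨1, one_ne_zero, by simp⟩
  | succ j ih =>
    intro hj
    obtain ⟨c, hc, e⟩ := h.2 j hj
    obtain ⟨d, hd, e'⟩ := ih (by omega)
    exact ⟨c * d, mul_ne_zero hc hd, by rw [e, e', smul_smul]⟩

theorem Chain.kill {F : R} {x : ℕ → M} {len : ℕ} (h : Chain k F x len) (j : ℕ) (hj : j < len)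
    (m : ℕ) (hm : j < m) : F ^ m • x j = 0 := by
  obtain ⟨c, hc, e⟩ := h.exists j hj
  obtain ⟨d, rfl⟩ : ∃ d, m = d + 1 + j := ⟨m - 1 - j, by omega⟩
  rw [pow_add, mul_smul, e, smul_comm, pow_succ, mul_smul, h.1]
  simp

theorem chain_li {F : R} {ι : Type} (len : ι → ℕ) (x : ι → ℕ → M)
    (hx : ∀ i, Chain k F (x i) (len i)) (h0 : LinearIndependent k (fun i => x i 0)) :
    LinearIndependent k (fun p : Σ i, Fin (len i) => x p.1 p.2) := by
  classical
  rw [linearIndependent_iff']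
  intro s g hg
  by_contra hcon
  push Not at hcon
  obtain ⟨p0, hp0, hp0'⟩ := hcon
  obtain ⟨p, hp, hmax⟩ := Finset.exists_max_image (s.filter (fun p => g p ≠ 0))
    (fun p => (p.2 : ℕ)) ⟨p0, by simp [hp0, hp0']⟩
  simp only [Finset.mem_filter] at hp hmax
  obtain ⟨J, hJ⟩ : ∃ J : ℕ, J = (p.2 : ℕ) := ⟨_, rfl⟩
  rw [← hJ] at hmax
  choose d hd hde using fun p : Σ i, Fin (len i) => (hx p.1).exists p.2 p.2.2
  have h1 : ∑ p ∈ s.filter (fun p => (p.2 : ℕ) = J), (g p * d p) • x p.1 0 = 0 := by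
    have := congrArg (fun v => F ^ J • v) hg
    simp only [Finset.smul_sum, smul_zero] at this
    rw [← this, Finset.sum_filter]
    apply Finset.sum_congr rfl
    intro r hr
    split_ifs with hrJ
    · rw [mul_smul, ← hde, hrJ, smul_comm]
    · by_cases hgr : g r = 0
      · simp [hgr]
      · have := hmax r ⟨hr, hgr⟩
        rw [smul_comm, (hx r.1).kill r.2 r.2.2 J (by omega), smul_zero]
  have h2 := h0.comp (fun r : {r : Σ i, Fin (len i) // (r.2 : ℕ) = J} => r.1.1) (by
    rintro ⟨⟨i, a, ha⟩, h⟩ ⟨⟨i', a', ha'⟩, h'⟩ e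
    simp only at e h h'
    subst e; subst h; subst h'
    rfl)
  rw [linearIndependent_iff'] at h2
  have h3 := h2 ((s.filter (fun p => (p.2 : ℕ) = J)).subtype _) (fun r => g r.1 * d r.1) (by
    rw [← h1]
    have := Finset.sum_subtype_eq_sum_filter (s := s.filter (fun p => (p.2 : ℕ) = J))
      (p := fun p => (p.2 : ℕ) = J) (fun r : (Σ i, Fin (len i)) => (g r * d r) • x r.1 0)
    rw [Finset.filter_filter] at this
    simp only [and_self] at this
    rw [← this]
    rfl) ⟨p, hJ.symm⟩ (by simp [hp.1, hJ])
  rcases mul_eq_zero.1 h3 with h | h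
  · exact hp.2 h
  · exact hd _ h

variable {N : ℕ} {q qb : k} {K G E F : R}

namespace Alg

theorem q0 (h : Alg k N q qb K G E F) : q ≠ 0 := h.prim.ne_zero (by have := h.N0; omega)

theorem q1 (h : Alg k N q qb K G E F) : q ≠ 1 := by
  have := h.prim.pow_ne_one_of_pos_of_lt (l := 1) one_ne_zero
    (by have := h.N0; have := Nat.le_of_dvd this h.N4; omega)
  simpa using this

theorem stable (h : Alg k N q qb K G E F) (W : Submodule k M)
    (hK : ∀ v ∈ W, K • v ∈ W) (hG : ∀ v ∈ W, G • v ∈ W) (hE : ∀ v ∈ W, E • v ∈ W)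
    (hF : ∀ v ∈ W, F • v ∈ W) (u : R) : ∀ v ∈ W, u • v ∈ W := by
  let S : Subalgebra k R :=
    { carrier := {u | ∀ v ∈ W, u • v ∈ W}
      mul_mem' := by
        intro a b ha hb v hv
        rw [mul_smul]; exact ha _ (hb _ hv)
      add_mem' := by
        intro a b ha hb v hv
        rw [add_smul]; exact W.add_mem (ha _ hv) (hb _ hv)
      algebraMap_mem' := by
        intro r v hv
        rw [algebraMap_smul]; exact W.smul_mem _ hv }
  have : S = ⊤ := h.gen S hK hG hE hF
  have hu : u ∈ S := this ▸ Algebra.mem_top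
  exact hu

theorem span_le (h : Alg k N q qb K G E F) (W : Submodule k M)
    (hK : ∀ v ∈ W, K • v ∈ W) (hG : ∀ v ∈ W, G • v ∈ W) (hE : ∀ v ∈ W, E • v ∈ W)
    (hF : ∀ v ∈ W, F • v ∈ W) {y : M} (hy : y ∈ W) :
    ∀ v ∈ Submodule.span R {y}, v ∈ W := by
  intro v hv
  obtain ⟨u, rfl⟩ := Submodule.mem_span_singleton.1 hv
  exact h.stable W hK hG hE hF u y hy

theorem wtE (h : Alg k N q qb K G E F) {κ l : k} {v : M} (hv : Wt K G κ l v) :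
    Wt K G (qb * κ) ((q ^ 2)⁻¹ * l) (E • v) := by
  constructor
  · rw [← mul_smul, h.KE, smul_assoc, mul_smul, hv.1, smul_comm E κ v, smul_smul]
  · rw [← mul_smul, h.GE, smul_assoc, mul_smul, hv.2, smul_comm E l v, smul_smul]

theorem wtF (h : Alg k N q qb K G E F) {κ l : k} {v : M} (hv : Wt K G κ l v) :
    Wt K G (qb⁻¹ * κ) (q ^ 2 * l) (F • v) := by
  constructor
  · rw [← mul_smul, h.KF, smul_assoc, mul_smul, hv.1, smul_comm F κ v, smul_smul]
  · rw [← mul_smul, h.GF, smul_assoc, mul_smul, hv.2, smul_comm F l v, smul_smul]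

theorem wtEp (h : Alg k N q qb K G E F) {κ l : k} {v : M} (hv : Wt K G κ l v) (j : ℕ) :
    Wt K G (qb ^ j * κ) ((q ^ 2)⁻¹ ^ j * l) (E ^ j • v) := by
  induction j with
  | zero => simpa using hv
  | succ j ih =>
    have := h.wtE ih
    rw [← mul_smul, ← pow_succ', ← mul_assoc, ← mul_assoc, ← pow_succ', ← pow_succ'] at this
    exact this

theorem wtFp (h : Alg k N q qb K G E F) {κ l : k} {v : M} (hv : Wt K G κ l v) (j : ℕ) :
    Wt K G (qb⁻¹ ^ j * κ) ((q ^ 2) ^ j * l) (F ^ j • v) := by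
  induction j with
  | zero => simpa using hv
  | succ j ih =>
    have := h.wtF ih
    rw [← mul_smul, ← pow_succ', ← mul_assoc, ← mul_assoc, ← pow_succ', ← pow_succ'] at this
    exact this

theorem FEp (h : Alg k N q qb K G E F) {κ l : k} {v : M} (hv : Wt K G κ l v) (j : ℕ) :
    F • E ^ (j + 1) • v = q⁻¹ ^ (j + 1) • E ^ (j + 1) • F • v + cc q l (j + 1) • E ^ j • v := by
  have key : ∀ u : M, F • E • u = q⁻¹ • E • F • u + u - G • u := by
    intro u
    rw [← mul_smul, h.FE, sub_smul, add_smul, one_smul, smul_assoc, mul_smul]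
  induction j with
  | zero => simp [key, cc, hv.2, sub_smul]; abel
  | succ j ih =>
    rw [pow_succ' E (j + 1), mul_smul, key, ih, (h.wtEp hv (j + 1)).2]
    have e : cc q l (j + 1 + 1) = q⁻¹ * cc q l (j + 1) + 1 - (q ^ 2)⁻¹ ^ (j + 1) * l := rfl
    rw [e, sub_smul, add_smul, one_smul, smul_add, smul_add]
    rw [smul_comm E (q⁻¹ ^ (j + 1)) (_ : M), smul_comm E (cc q l (j + 1)) (_ : M), smul_smul,
      smul_smul q⁻¹ (cc q l (j + 1)), ← mul_smul E (E ^ j) v, ← pow_succ' E j, ← pow_succ' q⁻¹ (j + 1),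
      mul_smul E (E ^ (j + 1)) (F • v)]
    abel

theorem cc_closed (h : Alg k N q qb K G E F) (l : k) (m : ℕ) :
    cc q l m * (1 - q) * q ^ (2 * m) = q * (1 - q ^ m) * (q ^ m - l * q) := by
  have q0 := h.q0
  induction m with
  | zero => simp [cc]
  | succ m ih =>
    have e : (q ^ 2)⁻¹ ^ m * q ^ (2 * m) = 1 := by
      rw [inv_pow, ← pow_mul, inv_mul_cancel₀ (pow_ne_zero _ q0)]
    have e2 : q⁻¹ * q = 1 := inv_mul_cancel₀ q0
    rw [cc]
    have : (q⁻¹ * cc q l m + 1 - (q ^ 2)⁻¹ ^ m * l) * (1 - q) * q ^ (2 * (m + 1))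
      = (q⁻¹ * q) * q * (cc q l m * (1 - q) * q ^ (2 * m)) + (1 - q) * q ^ 2 * q ^ (2 * m)
        - ((q ^ 2)⁻¹ ^ m * q ^ (2 * m)) * l * (1 - q) * q ^ 2 := by ring
    rw [this, ih, e, e2]
    ring

theorem cc_ne (h : Alg k N q qb K G E F) (l : k) (m : ℕ) (h1 : q ^ m ≠ 1) (h2 : q ^ m ≠ l * q) :
    cc q l m ≠ 0 := by
  intro h0
  have := h.cc_closed l m
  rw [h0, zero_mul, zero_mul, eq_comm, mul_eq_zero, mul_eq_zero] at this
  rcases this with (h' | h') | h'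
  · exact h.q0 h'
  · exact h1 (sub_eq_zero.1 h').symm
  · exact h2 (sub_eq_zero.1 h')

theorem cc_zero (h : Alg k N q qb K G E F) (l : k) (m : ℕ) (h2 : q ^ m = l * q) :
    cc q l m = 0 := by
  have := h.cc_closed l m
  rw [h2, sub_self, mul_zero, mul_eq_zero, mul_eq_zero] at this
  rcases this with (h' | h') | h'
  · exact h'
  · exact absurd (sub_eq_zero.1 h').symm h.q1
  · exact absurd h' (pow_ne_zero _ h.q0)

theorem pow_inj (h : Alg k N q qb K G E F) {a b : ℕ} (ha : a < N) (hb : b < N)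
    (hab : q ^ a = q ^ b) : a = b := h.prim.pow_inj ha hb hab

theorem pow_ne_one (h : Alg k N q qb K G E F) {a : ℕ} (h0 : 0 < a) (ha : a < N) : q ^ a ≠ 1 :=
  h.prim.pow_ne_one_of_pos_of_lt (by omega) ha

/-- chain generated by a lowest weight vector -/
theorem chain_low (h : Alg k N q qb K G E F) {κ l : k} {w : M} (hw : Wt K G κ l w)
    (hF : F • w = 0) (s : ℕ) (hl : l * q = q ^ s) (hs : s < N) :
    Chain k F (fun j => E ^ j • w) s := by
  refine ⟨by simpa using hF, fun j hj => ⟨cc q l (j + 1), ?_, ?_⟩⟩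
  · apply h.cc_ne
    · exact h.pow_ne_one (by omega) (by omega)
    · rw [hl]; intro e
      have := h.pow_inj (by omega) (by omega) e
      omega
  · simp only
    rw [pow_succ, mul_smul, h.FEp hw j, hF, smul_zero, smul_zero, zero_add,
      smul_comm]

end Alg
end
end QFL

namespace QFL
set_option linter.unusedSectionVars false

section
variable {k R M : Type} [Field k] [Ring R] [Algebra k R] [AddCommGroup M] [Module k M]
  [Module R M] [IsScalarTower k R M] {N : ℕ} {q qb : k} {K G E F : R}

theorem stable_span {ι : Type} (x : ι → M) (T : R)
    (h : ∀ i, T • x i ∈ Submodule.span k (Set.range x)) :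
    ∀ v ∈ Submodule.span k (Set.range x), T • v ∈ Submodule.span k (Set.range x) := by
  intro v hv
  induction hv using Submodule.span_induction with
  | mem v hv => obtain ⟨i, rfl⟩ := hv; exact h i
  | zero => simp
  | add a b _ _ ha hb => rw [smul_add]; exact Submodule.add_mem _ ha hb
  | smul c a _ ha => rw [smul_comm]; exact Submodule.smul_mem _ _ ha

namespace Alg

theorem span_eq (h : Alg k N q qb K G E F) {ι : Type} (x : ι → M) {y : M}
    (hK : ∀ i, K • x i ∈ Submodule.span k (Set.range x))
    (hG : ∀ i, G • x i ∈ Submodule.span k (Set.range x))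
    (hE : ∀ i, E • x i ∈ Submodule.span k (Set.range x))
    (hF : ∀ i, F • x i ∈ Submodule.span k (Set.range x))
    (hy : y ∈ Submodule.span k (Set.range x)) (hx : ∀ i, x i ∈ Submodule.span R {y}) :
    (Submodule.span R {y}).restrictScalars k = Submodule.span k (Set.range x) := by
  apply le_antisymm
  · intro v hv
    exact h.span_le _ (stable_span x K hK) (stable_span x G hG) (stable_span x E hE)
      (stable_span x F hF) hy v hv
  · rw [Submodule.span_le]
    rintro _ ⟨i, rfl⟩
    exact hx i

theorem low_span (h : Alg k N q qb K G E F) {κ l : k} {w : M} (hw : Wt K G κ l w)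
    (hF : F • w = 0) (s : ℕ) (hs0 : 0 < s) (hE : E ^ s • w = 0) :
    (Submodule.span R {w}).restrictScalars k =
      Submodule.span k (Set.range (fun j : Fin s => E ^ (j : ℕ) • w)) := by
  apply h.span_eq
  · intro j
    rw [(h.wtEp hw j).1]
    exact Submodule.smul_mem _ _ (Submodule.subset_span ⟨j, rfl⟩)
  · intro j
    rw [(h.wtEp hw j).2]
    exact Submodule.smul_mem _ _ (Submodule.subset_span ⟨j, rfl⟩)
  · intro j
    rw [← mul_smul, ← pow_succ']
    by_cases hj : (j : ℕ) + 1 < s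
    · exact Submodule.subset_span ⟨⟨j + 1, hj⟩, rfl⟩
    · have : (j : ℕ) + 1 = s := by have := j.2; omega
      rw [this, hE]; exact Submodule.zero_mem _
  · rintro ⟨j, hj⟩
    cases j with
    | zero => simp [hF]
    | succ j =>
      simp only
      rw [h.FEp hw j, hF, smul_zero, smul_zero, zero_add]
      exact Submodule.smul_mem _ _ (Submodule.subset_span ⟨⟨j, by omega⟩, rfl⟩)
  · exact Submodule.subset_span ⟨⟨0, hs0⟩, by simp⟩
  · intro j
    exact Submodule.smul_mem _ _ (Submodule.mem_span_singleton_self w)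

theorem low_li (h : Alg k N q qb K G E F) {κ l : k} {w : M} (hw : Wt K G κ l w) (w0 : w ≠ 0)
    (hF : F • w = 0) (s : ℕ) (hs : s < N) (hl : l * q = q ^ s) :
    LinearIndependent k (fun j : Fin s => E ^ (j : ℕ) • w) := by
  have := chain_li (k := k) (F := F) (ι := Unit) (fun _ => s) (fun _ j => E ^ j • w)
    (fun _ => h.chain_low hw hF s hl hs) (by
      rw [linearIndependent_unique_iff]; simpa using w0)
  exact this.comp (fun j : Fin s => ⟨(), j⟩) (by intro a b e; simpa using e)

theorem low_finrank (h : Alg k N q qb K G E F) {κ l : k} {w : M} (hw : Wt K G κ l w) (w0 : w ≠ 0)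
    (hF : F • w = 0) (s : ℕ) (hs0 : 0 < s) (hs : s < N) (hl : l * q = q ^ s)
    (hE : E ^ s • w = 0) : Module.finrank k (Submodule.span R {w}) = s := by
  have e := h.low_span hw hF s hs0 hE
  have : Module.finrank k ((Submodule.span R {w}).restrictScalars k) = s := by
    rw [e, finrank_span_eq_card (h.low_li hw w0 hF s hs hl), Fintype.card_fin]
  exact this

theorem low_simple (h : Alg k N q qb K G E F) {κ l : k} {w : M} (hw : Wt K G κ l w) (w0 : w ≠ 0)
    (hF : F • w = 0) (s : ℕ) (hs0 : 0 < s) (hs : s < N) (hl : l * q = q ^ s)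
    (hE : E ^ s • w = 0) : IsSimpleModule R (Submodule.span R {w}) := by
  classical
  have e := h.low_span hw hF s hs0 hE
  have hch := h.chain_low hw hF s hl hs
  rw [isSimpleModule_iff_toSpanSingleton_surjective]
  refine ⟨⟨⟨⟨w, Submodule.mem_span_singleton_self w⟩, 0, ?_⟩⟩, ?_⟩
  · intro h'; exact w0 (congrArg Subtype.val h')
  · rintro ⟨v, hv⟩ hv0 ⟨u, hu⟩
    have hv0' : v ≠ 0 := fun h' => hv0 (Subtype.ext h')
    suffices ∃ r : R, r • v = w by
      obtain ⟨r, hr⟩ := this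
      obtain ⟨r', hr'⟩ := Submodule.mem_span_singleton.1 hu
      refine ⟨r' * r, Subtype.ext ?_⟩
      simp [mul_smul, hr, hr']
    have hv' : v ∈ (Submodule.span R {w}).restrictScalars k := hv
    rw [e, Submodule.mem_span_range_iff_exists_fun] at hv'
    obtain ⟨c, hc⟩ := hv'
    have : ∃ j, c j ≠ 0 := by
      by_contra hcon
      push Not at hcon
      exact hv0' (by rw [← hc]; simp [hcon])
    obtain ⟨j0, hj0⟩ := this
    obtain ⟨J, hJ, hmax⟩ := Finset.exists_max_image (Finset.univ.filter (fun p => c p ≠ 0))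
      (fun p => (p : ℕ)) ⟨j0, by simp [hj0]⟩
    simp only [Finset.mem_filter, Finset.mem_univ, true_and] at hJ hmax
    obtain ⟨d, hd, hde⟩ := hch.exists J J.2
    simp only [pow_zero, one_smul] at hde
    have h1 : F ^ (J : ℕ) • v = (c J * d) • w := by
      rw [← hc, Finset.smul_sum, Finset.sum_eq_single J]
      · rw [smul_comm, hde, smul_smul]
      · intro j _ hj
        by_cases hcj : c j = 0
        · simp [hcj]
        · have h2 := hmax j hcj
          have h3 : (j : ℕ) ≠ J := fun h' => hj (Fin.ext h')
          have h4 : F ^ (J : ℕ) • E ^ (j : ℕ) • w = 0 := hch.kill j j.2 J (by omega)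
          rw [smul_comm, h4, smul_zero]
      · simp
    refine ⟨(c J * d)⁻¹ • F ^ (J : ℕ), ?_⟩
    rw [smul_assoc, h1, smul_smul, inv_mul_cancel₀ (mul_ne_zero hJ hd), one_smul]

end Alg

theorem proj_el [CharZero k] {T : R} {c : k} (N : ℕ) (N0 : 0 < N) (hT : T ^ N = 1) (hc : c ^ N = 1) :
    ∃ e : R, T * e = c • e ∧ (∀ G : R, T * G = G * T → e * G = G * e) ∧
      ∀ (M : Type) [AddCommGroup M] [Module k M] [Module R M] [IsScalarTower k R M] (y : M),
        T • y = c • y → e • y = y := by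
  have c0 : c ≠ 0 := by rintro rfl; simp [N0.ne'] at hc
  have hS : (c⁻¹ • T) ^ N = 1 := by rw [smul_pow, hT, inv_pow, hc]; simp
  have hk : (N : k) ≠ 0 := by exact_mod_cast N0.ne'
  refine ⟨(N : k)⁻¹ • ∑ t ∈ Finset.range N, (c⁻¹ • T) ^ t, ?_, ?_, ?_⟩
  · have h1 : (c⁻¹ • T) * ∑ t ∈ Finset.range N, (c⁻¹ • T) ^ t
        = ∑ t ∈ Finset.range N, (c⁻¹ • T) ^ t := by
      have := mul_geom_sum (c⁻¹ • T) N
      rw [hS, sub_self, sub_mul, one_mul, sub_eq_zero] at this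
      exact this
    have h2 : T = c • (c⁻¹ • T) := by rw [smul_smul, mul_inv_cancel₀ c0, one_smul]
    nth_rewrite 1 [h2]
    rw [mul_smul_comm, smul_mul_assoc, h1, smul_comm]
  · intro G hG
    have hc : Commute (c⁻¹ • T) G := Commute.smul_left hG c⁻¹
    have : Commute (∑ t ∈ Finset.range N, (c⁻¹ • T) ^ t) G :=
      Commute.sum_left _ _ _ (fun t _ => hc.pow_left t)
    exact Commute.smul_left this ((N : k)⁻¹)
  · intro M _ _ _ _ y hy
    have h1 : ∀ t : ℕ, (c⁻¹ • T) ^ t • y = y := by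
      intro t
      induction t with
      | zero => simp
      | succ t ih =>
        rw [pow_succ, mul_smul, smul_assoc, hy, smul_smul, inv_mul_cancel₀ c0, one_smul, ih]
    rw [smul_assoc, Finset.sum_smul]
    simp only [h1]
    rw [Finset.sum_const, Finset.card_range, ← Nat.cast_smul_eq_nsmul k, smul_smul,
      inv_mul_cancel₀ hk, one_smul]

theorem eig_pow {T : R} {c : k} {y : M} (hy : T • y = c • y) (t : ℕ) : T ^ t • y = c ^ t • y := by
  induction t with
  | zero => simp
  | succ t ih => rw [pow_succ, mul_smul, hy, smul_comm, ih, smul_smul, pow_succ']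

theorem eig_pow_one {T : R} {c : k} {y : M} (hy : T • y = c • y) (y0 : y ≠ 0) (hT : T ^ N = 1) :
    c ^ N = 1 := by
  have := eig_pow hy N
  rw [hT, one_smul] at this
  have h2 : (c ^ N - 1) • y = 0 := by rw [sub_smul, ← this, one_smul, sub_self]
  rcases smul_eq_zero.1 h2 with h | h
  · exact sub_eq_zero.1 h
  · exact absurd h y0

namespace Alg

theorem wt_el [CharZero k] (h : Alg k N q qb K G E F) {κ l : k} {y : M} (hy : Wt K G κ l y)
    (y0 : y ≠ 0) : ∃ e : R, Wt K G κ l e ∧ e • y = y := by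
  obtain ⟨e, h1, h2, h3⟩ := proj_el (k := k) N h.N0 h.KN (eig_pow_one hy.1 y0 h.KN)
  obtain ⟨e', h1', h2', h3'⟩ := proj_el (k := k) N h.N0 h.GN (eig_pow_one hy.2 y0 h.GN)
  refine ⟨e * e', ⟨?_, ?_⟩, ?_⟩
  · simp only [smul_eq_mul]; rw [← mul_assoc, h1, smul_mul_assoc]
  · simp only [smul_eq_mul]; rw [← mul_assoc, ← h2 G h.KG, mul_assoc, h1', mul_smul_comm]
  · rw [mul_smul, h3' M y hy.2, h3 M y hy.1]

end Alg
end
end QFL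

namespace QFL
set_option linter.unusedSectionVars false

/-- Casimir-like element. -/
def Cas {k R : Type} [Field k] [Ring R] [Algebra k R] (q : k) (G E F : R) : R :=
  E * F + (1 - q)⁻¹ • (q • (1 : R) + q ^ 2 • G)

/-- Eigenvalues attached to the Casimir element. -/
def xi {k : Type} [Field k] (q l : k) (r : ℕ) : k := (1 - q)⁻¹ * (q ^ 2 * q⁻¹ ^ r + q ^ (r + 1) * l)

section
variable {k R M : Type} [Field k] [Ring R] [Algebra k R] [AddCommGroup M] [Module k M]
  [Module R M] [IsScalarTower k R M] {N : ℕ} {q qb : k} {K G E F : R}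
open Polynomial

theorem aeval_comm {T X : R} (h : T * X = X * T) (g : k[X]) :
    T * aeval X g = aeval X g * T := by
  induction g using Polynomial.induction_on' with
  | add a b ha hb => simp only [map_add, mul_add, add_mul, ha, hb]
  | monomial j a =>
    rw [aeval_monomial]
    have h2 : Commute T (X ^ j) := Commute.pow_right h j
    have h1 : Commute T (algebraMap k R a) := (Algebra.commutes a T).symm
    exact h1.mul_right h2

namespace Alg

theorem KX (h : Alg k N q qb K G E F) : K * Cas q G E F = Cas q G E F * K := by
  have hb := h.qb0
  have h1 : K * (E * F) = E * F * K := by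
    rw [← mul_assoc, h.KE, smul_mul_assoc, mul_assoc, h.KF, mul_smul_comm, smul_smul,
      mul_inv_cancel₀ hb, one_smul, mul_assoc]
  simp only [Cas, mul_add, add_mul, mul_smul_comm, smul_mul_assoc, h1, h.KG, mul_one, one_mul]

theorem GX (h : Alg k N q qb K G E F) : G * Cas q G E F = Cas q G E F * G := by
  have hb : q ^ 2 ≠ 0 := pow_ne_zero _ h.q0
  have h1 : G * (E * F) = E * F * G := by
    rw [← mul_assoc, h.GE, smul_mul_assoc, mul_assoc, h.GF, mul_smul_comm, smul_smul,
      inv_mul_cancel₀ hb, one_smul, mul_assoc]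
  simp only [Cas, mul_add, add_mul, mul_smul_comm, smul_mul_assoc, h1, mul_one, one_mul]

theorem XF (h : Alg k N q qb K G E F) : Cas q G E F * F = q • (F * Cas q G E F) := by
  have q0 := h.q0
  have q1 : 1 - q ≠ 0 := sub_ne_zero.2 h.q1.symm
  have e : F * (E * F) = q⁻¹ • (E * F * F) + F - q ^ 2 • (F * G) := by
    rw [← mul_assoc, h.FE, sub_mul, add_mul, one_mul, smul_mul_assoc, h.GF]
  simp only [Cas, mul_add, add_mul, mul_smul_comm, smul_mul_assoc, e, h.GF, mul_one, one_mul]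
  match_scalars <;> field_simp <;> ring

theorem XFp (h : Alg k N q qb K G E F) (b : ℕ) :
    Cas q G E F * F ^ b = q ^ b • (F ^ b * Cas q G E F) := by
  induction b with
  | zero => simp
  | succ b ih =>
    rw [pow_succ, ← mul_assoc, ih, smul_mul_assoc, mul_assoc, h.XF, mul_smul_comm, smul_smul,
      mul_assoc, pow_succ]

theorem wtX (h : Alg k N q qb K G E F) {κ l : k} {v : M} (hv : Wt K G κ l v) (g : k[X]) :
    Wt K G κ l (aeval (Cas q G E F) g • v) := by
  constructor
  · rw [← mul_smul, aeval_comm h.KX, mul_smul, hv.1, smul_comm]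
  · rw [← mul_smul, aeval_comm h.GX, mul_smul, hv.2, smul_comm]

theorem Jstep (h : Alg k N q qb K G E F) {κ l : k} {v : M} (hv : Wt K G κ l v) (b : ℕ) :
    E • F ^ (b + 1) • v =
      q ^ b • F ^ b • aeval (Cas q G E F) (X - C (xi q l (b + 1))) • v := by
  have q0 := h.q0
  have q1 : 1 - q ≠ 0 := sub_ne_zero.2 h.q1.symm
  have e1 : E * F = Cas q G E F - (1 - q)⁻¹ • (q • (1 : R) + q ^ 2 • G) := by
    rw [Cas]; abel
  rw [pow_succ', mul_smul, ← mul_smul E F, e1]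
  simp only [sub_smul, add_smul, smul_assoc, (h.wtFp hv b).2, one_smul]
  rw [← mul_smul (Cas q G E F), h.XFp]
  simp only [map_sub, aeval_X, aeval_C, sub_smul, smul_sub, smul_assoc, mul_smul, algebraMap_smul]
  rw [smul_comm (F ^ b) (xi q l (b + 1)) v]
  have : xi q l (b + 1) * q ^ b = (1 - q)⁻¹ * (q + q ^ 2 * (q ^ 2) ^ b * l) := by
    rw [xi]
    rw [inv_pow]
    field_simp
    ring
  rw [sub_right_inj, smul_smul (q ^ b), mul_comm (q ^ b), this]
  simp only [smul_smul, ← add_smul]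
  congr 1
  ring

theorem J (h : Alg k N q qb K G E F) (l : k) (c d : ℕ) :
    ∃ a : k, a ≠ 0 ∧ ∀ (κ : k) (v : M), Wt K G κ l v → E ^ c • F ^ (c + d) • v =
      a • F ^ d • aeval (Cas q G E F) (∏ r ∈ Finset.range c, (X - C (xi q l (d + 1 + r)))) • v := by
  induction c with
  | zero => exact ⟨1, one_ne_zero, fun κ v _ => by simp⟩
  | succ c ih =>
    obtain ⟨a, ha, H⟩ := ih
    refine ⟨q ^ (c + d) * a, mul_ne_zero (pow_ne_zero _ h.q0) ha, fun κ v hv => ?_⟩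
    have e : c + 1 + d = (c + d) + 1 := by ring
    have e' : d + 1 + c = (c + d) + 1 := by ring
    rw [pow_succ, mul_smul, e, h.Jstep hv, smul_comm, H κ _ (h.wtX hv _), Finset.prod_range_succ,
      map_mul, mul_smul, e', mul_smul]

theorem xi_sub (h : Alg k N q qb K G E F) (l : k) (m r : ℕ) (hl : l * q = q ^ m) :
    (1 - q) * q ^ r * (xi q l r - xi q l 1) = (q - q ^ r) * (q - q ^ (r + m)) := by
  have q0 := h.q0
  have q1 : 1 - q ≠ 0 := sub_ne_zero.2 h.q1.symm
  rw [xi, xi, pow_add q r m, ← hl, inv_pow]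
  field_simp
  ring

theorem xi_eq (h : Alg k N q qb K G E F) (l : k) (m p : ℕ) (hl : l * q = q ^ m) (hp : p + m = N) :
    xi q l (p + 1) = xi q l 1 := by
  have q0 := h.q0
  have q1 : 1 - q ≠ 0 := sub_ne_zero.2 h.q1.symm
  have := h.xi_sub l m (p + 1) hl
  have e : p + 1 + m = N + 1 := by omega
  rw [e, pow_succ q N, h.prim.pow_eq_one, one_mul, sub_self, mul_zero, mul_eq_zero] at this
  rcases this with h' | h'
  · exact absurd h' (mul_ne_zero q1 (pow_ne_zero _ q0))
  · exact sub_eq_zero.1 h'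

theorem xi_ne (h : Alg k N q qb K G E F) (l : k) (m p r : ℕ) (hl : l * q = q ^ m) (hp : p + m = N)
    (hp0 : 0 < p) (hr : 2 ≤ r) (hr' : r ≤ N) (hrp : r ≠ p + 1) :
    xi q l r ≠ xi q l 1 := by
  have q0 := h.q0
  intro e
  have := h.xi_sub l m r hl
  rw [e, sub_self, mul_zero, eq_comm, mul_eq_zero, sub_eq_zero, sub_eq_zero] at this
  have key : ∀ a b, q * q ^ a = q * q ^ b → a < N → b < N → a = b := fun a b hab ha hb =>
    h.pow_inj ha hb (mul_left_cancel₀ q0 hab)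
  rcases this with h' | h'
  · have := key 0 (r - 1) (by rw [← pow_succ', ← pow_succ', Nat.sub_add_cancel (by omega)]; simpa using h') h.N0 (by omega)
    omega
  · by_cases hlt : r + m - 1 < N
    · have := key 0 (r + m - 1) (by rw [← pow_succ', ← pow_succ', Nat.sub_add_cancel (by omega)]; simpa using h') h.N0 (by omega)
      omega
    · have := key 0 (r + m - 1 - N) (by
        have e2 : q ^ (r + m) = q ^ N * (q ^ (r + m - 1 - N + 1)) := by
          rw [← pow_add]; congr 1; omega
        rw [e2, h.prim.pow_eq_one, one_mul] at h'
        rw [← pow_succ', ← pow_succ']; simpa using h') h.N0 (by omega)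
      omega

set_option maxHeartbeats 1000000 in
/-- Algebraic core of the projectivity statement. -/
theorem core [CharZero k] (h : Alg k N q qb K G E F) {κ l : k} {y : M} (p m : ℕ) (hp0 : 0 < p)
    (hm0 : 0 < m) (hpm : p + m = N) (hl : l * q = q ^ m) (hy : Wt K G κ l y) (y0 : y ≠ 0)
    (hXy : E • F • E • F • y = 0) :
    ∃ v : R, Wt K G κ l v ∧ v • y = y ∧ F ^ (p + 1) * v = 0 ∧
      ∃ c : k, F * v = c • (E ^ (p - 1) * F ^ p * v) := by
  obtain ⟨e, he, hey⟩ := h.wt_el hy y0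
  set Y := Cas q G E F with hYdef
  set g0 : k[X] := X - C (xi q l 1) with hg0
  set Plo : k[X] := ∏ r ∈ Finset.range (p - 1), (X - C (xi q l (1 + 1 + r))) with hPlo
  set Phi : k[X] := ∏ r ∈ Finset.range (m - 1), (X - C (xi q l (p + 1 + 1 + r))) with hPhi
  have hPall : ∏ r ∈ Finset.range (N - 1), (X - C (xi q l (1 + 1 + r))) = Plo * g0 * Phi := by
    have e1 : N - 1 = (p - 1) + (1 + (m - 1)) := by omega
    rw [e1, Finset.prod_range_add, Finset.prod_range_add, Finset.prod_range_one, mul_assoc]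
    congr 2
    · have : 1 + 1 + (p - 1 + 0) = p + 1 := by omega
      rw [this, h.xi_eq l m p hl hpm]
    · apply Finset.prod_congr rfl
      intro r _
      have : 1 + 1 + (p - 1 + (1 + r)) = p + 1 + 1 + r := by omega
      rw [this]
  have hcop : IsCoprime (g0 ^ 2) (Plo * Phi) := by
    apply IsCoprime.pow_left
    apply IsCoprime.mul_right
    · apply IsCoprime.prod_right
      intro r hr
      have hr := Finset.mem_range.1 hr
      apply Polynomial.isCoprime_X_sub_C_of_isUnit_sub
      apply IsUnit.mk0
      exact sub_ne_zero.2 (h.xi_ne l m p _ hl hpm hp0 (by omega) (by omega) (by omega)).symm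
    · apply IsCoprime.prod_right
      intro r hr
      have hr := Finset.mem_range.1 hr
      apply Polynomial.isCoprime_X_sub_C_of_isUnit_sub
      apply IsUnit.mk0
      exact sub_ne_zero.2 (h.xi_ne l m p _ hl hpm hp0 (by omega) (by omega) (by omega)).symm
  obtain ⟨A, B, hAB⟩ := hcop
  obtain ⟨a1, ha1, H1⟩ := h.J (M := R) l (N - 1) 1
  obtain ⟨a2, ha2, H2⟩ := h.J (M := R) l (m - 1) (p + 1)
  obtain ⟨a3, ha3, H3⟩ := h.J (M := R) l (p - 1) 1
  have hA : ∀ g : k[X], F * (aeval Y (g * (Plo * Phi * g0)) * e) = 0 := by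
    intro g
    have := H1 κ _ (h.wtX he g)
    rw [hPall, Nat.sub_add_cancel h.N0, h.FN, zero_smul, smul_zero] at this
    have := (smul_eq_zero.1 this.symm).resolve_left ha1
    simp only [smul_eq_mul, pow_one, ← mul_assoc] at this
    rw [mul_assoc F, ← map_mul, mul_assoc] at this
    have e2 : g * (Plo * Phi * g0) = Plo * g0 * Phi * g := by ring
    rw [e2]; exact this
  have hB : ∀ g : k[X], F ^ (p + 1) * (aeval Y (g * Phi) * e) = 0 := by
    intro g
    have := H2 κ _ (h.wtX he g)
    have e1 : m - 1 + (p + 1) = N := by omega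
    rw [e1, h.FN, zero_smul, smul_zero] at this
    have := (smul_eq_zero.1 this.symm).resolve_left ha2
    simp only [smul_eq_mul, ← mul_assoc] at this
    rw [mul_assoc (F ^ (p + 1)), ← map_mul, mul_assoc] at this
    rw [← this, mul_comm g]
  have hs : aeval Y (B * (Plo * Phi)) * e = aeval Y (B * (Plo * Phi)) • e := rfl
  refine ⟨aeval Y (B * (Plo * Phi)) * e, ?_, ?_, ?_, ?_⟩
  · rw [hs]; exact h.wtX he _
  · have h1 : B * (Plo * Phi) = 1 - A * g0 * g0 := by rw [← hAB]; ring
    have h2 : ∀ z : M, Wt K G κ l z → aeval Y g0 • z = E • F • z := by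
      intro z hz
      have := h.Jstep hz 0
      simp only [zero_add, pow_one, pow_zero, one_smul] at this
      exact this.symm
    have h3 : Wt K G κ l (E • F • y) := by
      rw [← h2 y hy]; exact h.wtX hy _
    rw [mul_smul, hey, h1, map_sub, sub_smul, map_one, one_smul, map_mul, map_mul, mul_smul,
      mul_smul, h2 y hy, h2 _ h3, hXy, smul_zero, sub_zero]
  · have := hB (B * Plo)
    rwa [mul_assoc B] at this
  · have h1 := H3 κ _ (h.wtX he (B * (Plo * Phi)))
    rw [Nat.sub_add_cancel hp0] at h1
    have h0 : Plo.eval (xi q l 1) ≠ 0 := by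
      rw [hPlo, eval_prod, Finset.prod_ne_zero_iff]
      intro r hr
      have hr := Finset.mem_range.1 hr
      simp only [eval_sub, eval_X, eval_C]
      exact sub_ne_zero.2 (h.xi_ne l m p _ hl hpm hp0 (by omega) (by omega) (by omega)).symm
    obtain ⟨g, hg⟩ : g0 ∣ Plo - C (Plo.eval (xi q l 1)) := by
      rw [hg0, dvd_iff_isRoot]; simp
    have hg' : Plo = g0 * g + C (Plo.eval (xi q l 1)) := by rw [← hg]; ring
    have h4 : Plo * (B * (Plo * Phi)) = g * B * (Plo * Phi * g0)
        + Plo.eval (xi q l 1) • (B * (Plo * Phi)) := by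
      nth_rewrite 1 [hg']
      rw [smul_eq_C_mul]; ring
    refine ⟨(a3 * Plo.eval (xi q l 1))⁻¹, ?_⟩
    simp only [smul_eq_mul, pow_one, ← mul_assoc] at h1
    rw [mul_assoc F, ← map_mul, mul_assoc F] at h1
    have h5 : E ^ (p - 1) * F ^ p * (aeval Y (B * (Plo * Phi)) * e) =
        E ^ (p - 1) * F ^ p * aeval Y (B * (Plo * Phi)) * e := by simp only [mul_assoc]
    rw [h5]
    have h6 : (∏ r ∈ Finset.range (p - 1), (X - C (xi q l (1 + 1 + r)))) * (B * Plo * Phi)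
      = Plo * (B * (Plo * Phi)) := by rw [hPlo]; ring
    simp only [← mul_assoc] at h1 h4 h6 ⊢
    rw [h1, h6, h4, map_add, map_smul, mul_add, add_mul, ← hYdef]
    have h7 := hA (g * B)
    simp only [← mul_assoc] at h7
    simp only [h7, zero_add, mul_smul_comm, smul_smul, smul_mul_assoc]
    rw [mul_assoc, inv_mul_cancel₀]
    · rw [one_smul]
    · exact mul_ne_zero ha3 h0

end Alg
end
end QFL

namespace QFL
set_option linter.unusedSectionVars false

section
variable {k R M : Type} [Field k] [Ring R] [Algebra k R] [AddCommGroup M] [Module k M]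
  [Module R M] [IsScalarTower k R M] {N : ℕ} {q qb : k} {K G E F : R}

namespace Alg

theorem kill_low (h : Alg k N q qb K G E F) {κ l : k} {z : M} (hz : Wt K G κ l z)
    (hF : F • z = 0) (b : ℕ) : ∀ a, b < a → F ^ a • E ^ b • z = 0 := by
  induction b with
  | zero =>
    intro a ha
    obtain ⟨d, rfl⟩ : ∃ d, a = d + 1 := ⟨a - 1, by omega⟩
    rw [pow_succ, mul_smul, pow_zero, one_smul, hF, smul_zero]
  | succ b ih =>
    intro a ha
    obtain ⟨d, rfl⟩ : ∃ d, a = d + 1 := ⟨a - 1, by omega⟩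
    rw [pow_succ, mul_smul, h.FEp hz, hF, smul_zero, smul_zero, zero_add, smul_comm, ih d (by omega),
      smul_zero]

theorem EN_ge (h : Alg k N q qb K G E F) {a : ℕ} (ha : N ≤ a) : E ^ a = 0 := by
  obtain ⟨d, rfl⟩ := Nat.exists_eq_add_of_le ha
  rw [pow_add, h.EN, zero_mul]

/-- the data of the projective piece -/
structure PData (k : Type) {R M : Type} [Field k] [Ring R] [AddCommGroup M] [Module k M]
    [Module R M] (q qb : k) (K G E F : R) (κ lw : k) (w y : M) (p : ℕ) : Prop where
  hw : Wt K G κ lw w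
  hl : lw * q = q ^ p
  Fw : F • w = 0
  Fy : F • y = E ^ (p - 1) • w
  Ep : E ^ p • w ≠ 0
  hy : Wt K G (qb ^ p * κ) ((q ^ 2)⁻¹ ^ p * lw) y

variable {κ lw : k} {w y : M} {p : ℕ}

theorem lz (h : Alg k N q qb K G E F) (D : PData k q qb K G E F κ lw w y p) (m : ℕ)
    (hpm : p + m = N) : ((q ^ 2)⁻¹ ^ p * lw) * q = q ^ m := by
  have q0 := h.q0
  rw [mul_assoc, D.hl, inv_pow, ← pow_mul, inv_mul_eq_iff_eq_mul₀ (pow_ne_zero _ q0), ← pow_add]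
  have : 2 * p + m = N + p := by omega
  rw [this, pow_add, h.prim.pow_eq_one, one_mul]

theorem Fz (h : Alg k N q qb K G E F) (D : PData k q qb K G E F κ lw w y p) (p0 : 0 < p) :
    F • E ^ p • w = 0 := by
  obtain ⟨d, rfl⟩ : ∃ d, p = d + 1 := ⟨p - 1, by omega⟩
  rw [h.FEp D.hw, D.Fw, smul_zero, smul_zero, h.cc_zero _ _ D.hl.symm, zero_smul, zero_add]

theorem chainU (h : Alg k N q qb K G E F) (D : PData k q qb K G E F κ lw w y p) (p0 : 0 < p)
    (pN : p < N) : Chain k F (fun j => if j < p then E ^ j • w else E ^ (j - p) • y) N := by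
  refine ⟨by simpa [p0] using D.Fw, fun j hj => ?_⟩
  rcases lt_trichotomy (j + 1) p with hjp | hjp | hjp
  · refine ⟨cc q lw (j + 1), ?_, ?_⟩
    · apply h.cc_ne
      · exact h.pow_ne_one (by omega) (by omega)
      · rw [D.hl]; intro e
        have := h.pow_inj (by omega) (by omega) e
        omega
    · beta_reduce
      rw [if_pos hjp, if_pos (show j < p by omega)]
      rw [pow_succ, mul_smul, h.FEp D.hw j, D.Fw, smul_zero, smul_zero, zero_add, smul_comm]
  · refine ⟨1, one_ne_zero, ?_⟩
    beta_reduce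
    rw [if_neg (show ¬ j + 1 < p by omega), if_pos (show j < p by omega), hjp, Nat.sub_self, pow_zero, one_smul, one_smul,
      ← hjp, pow_succ, mul_smul, D.Fy]
    have : p - 1 = j := by omega
    rw [this]
  · obtain ⟨i, rfl⟩ : ∃ i, j = i + p := ⟨j - p, by omega⟩
    have hl' := h.lz D (N - p) (by omega)
    refine ⟨cc q ((q ^ 2)⁻¹ ^ p * lw) (i + 1), ?_, ?_⟩
    · apply h.cc_ne
      · exact h.pow_ne_one (by omega) (by omega)
      · rw [hl']; intro e
        have := h.pow_inj (by omega) (by omega) e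
        omega
    · beta_reduce
      rw [if_neg (show ¬ i + p + 1 < p by omega), if_neg (show ¬ i + p < p by omega)]
      have e1 : i + p + 1 - p = i + 1 := by omega
      have e2 : i + p - p = i := by omega
      have e3 : i + 1 + (p - 1) = i + p := by omega
      rw [e1, e2, pow_succ, mul_smul, h.FEp D.hy i, D.Fy, ← mul_smul (E ^ (i + 1)),
        ← pow_add, e3]
      rw [smul_add, smul_comm (F ^ (i + p)) (q⁻¹ ^ (i + 1)) (_ : M), pow_add E, mul_smul,
        h.kill_low (h.wtEp D.hw p) (h.Fz D p0) i (i + p) (by omega), smul_zero, zero_add, smul_comm]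

theorem chainV (h : Alg k N q qb K G E F) (D : PData k q qb K G E F κ lw w y p) (p0 : 0 < p)
    (pN : p < N) :
    Chain k F (fun j => if j < N - p then E ^ (j + p) • w else E ^ j • y) N := by
  have hl' := h.lz D (N - p) (by omega)
  have hz := h.wtEp D.hw p
  have Fz := h.Fz D p0
  refine ⟨by simpa [show 0 < N - p by omega] using Fz, fun j hj => ?_⟩
  rcases lt_trichotomy (j + 1) (N - p) with hjp | hjp | hjp
  · refine ⟨cc q ((q ^ 2)⁻¹ ^ p * lw) (j + 1), ?_, ?_⟩
    · apply h.cc_ne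
      · exact h.pow_ne_one (by omega) (by omega)
      · rw [hl']; intro e
        have := h.pow_inj (by omega) (by omega) e
        omega
    · beta_reduce
      rw [if_pos hjp, if_pos (show j < N - p by omega)]
      rw [pow_add E, mul_smul, pow_succ F, mul_smul, h.FEp hz j, Fz, smul_zero, smul_zero, zero_add,
        smul_comm, pow_add E, mul_smul]
  · refine ⟨q⁻¹ ^ (j + 1), pow_ne_zero _ (inv_ne_zero h.q0), ?_⟩
    beta_reduce
    rw [if_neg (show ¬ j + 1 < N - p by omega), if_pos (show j < N - p by omega), pow_succ F,
      mul_smul, h.FEp D.hy j, D.Fy, h.cc_zero _ (j + 1) (by rw [hl', hjp]), zero_smul, add_zero,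
      ← mul_smul (E ^ (j + 1)), ← pow_add]
    have : j + 1 + (p - 1) = j + p := by omega
    rw [this, smul_comm]
  · refine ⟨cc q ((q ^ 2)⁻¹ ^ p * lw) (j + 1), ?_, ?_⟩
    · apply h.cc_ne
      · exact h.pow_ne_one (by omega) (by omega)
      · rw [hl']; intro e
        have := h.pow_inj (by omega) (by omega) e
        omega
    · beta_reduce
      rw [if_neg (show ¬ j + 1 < N - p by omega), if_neg (show ¬ j < N - p by omega), pow_succ F,
        mul_smul, h.FEp D.hy j, D.Fy, ← mul_smul (E ^ (j + 1)), ← pow_add,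
        h.EN_ge (show N ≤ j + 1 + (p - 1) by omega), zero_smul, smul_zero, zero_add, smul_comm]

theorem w_mem (_D : PData k q qb K G E F κ lw w y p) (hc : ∃ c : k, c ≠ 0 ∧ F ^ p • y = c • w) :
    w ∈ Submodule.span R {y} := by
  obtain ⟨c, hc, e⟩ := hc
  have : w = (c⁻¹ • F ^ p) • y := by rw [smul_assoc, e, smul_smul, inv_mul_cancel₀ hc, one_smul]
  rw [this]
  exact Submodule.smul_mem _ _ (Submodule.mem_span_singleton_self y)

theorem w_mem' (h : Alg k N q qb K G E F) (D : PData k q qb K G E F κ lw w y p) (p0 : 0 < p)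
    (pN : p < N) : w ∈ Submodule.span R {y} := by
  apply w_mem D
  obtain ⟨c, hc, e⟩ := (h.chainU D p0 pN).exists p pN
  simp [p0] at e
  exact ⟨c, hc, e⟩

theorem li_two (h : Alg k N q qb K G E F) (D : PData k q qb K G E F κ lw w y p) (p0 : 0 < p)
    (pN : p < N) (p2 : 2 * p ≠ N) : LinearIndependent k ![w, E ^ p • w] := by
  have q0 := h.q0
  have hz := h.wtEp D.hw p
  rw [LinearIndependent.pair_iff]
  intro s t hst
  have l0 : lw ≠ 0 := by
    rintro h0
    have := D.hl
    rw [h0, zero_mul] at this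
    exact pow_ne_zero _ q0 this.symm
  have ne : (q ^ 2)⁻¹ ^ p * lw - lw ≠ 0 := by
    rw [sub_ne_zero]
    intro e
    have e1 : (q ^ 2)⁻¹ ^ p = 1 := mul_right_cancel₀ l0 (by rw [e, one_mul])
    rw [inv_pow, inv_eq_one, ← pow_mul] at e1
    obtain ⟨d, hd⟩ := (h.prim.pow_eq_one_iff_dvd _).1 e1
    have : d = 0 ∨ d = 1 ∨ 2 ≤ d := by omega
    rcases this with rfl | rfl | hd2
    · omega
    · omega
    · nlinarith
  have h1 := congrArg (fun v => G • v) hst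
  simp only [smul_add, smul_zero, smul_comm G s, smul_comm G t] at h1
  rw [D.hw.2, hz.2] at h1
  have h2 : (t * ((q ^ 2)⁻¹ ^ p * lw - lw)) • (E ^ p • w) = 0 := by
    have : (t * ((q ^ 2)⁻¹ ^ p * lw - lw)) • (E ^ p • w) =
      (s • lw • w + t • ((q ^ 2)⁻¹ ^ p * lw) • E ^ p • w) - lw • (s • w + t • E ^ p • w) := by
      generalize E ^ p • w = z
      module
    rw [this, h1, hst]; simp
  have ht : t = 0 := by
    rcases smul_eq_zero.1 h2 with h3 | h3
    · exact (mul_eq_zero.1 h3).resolve_right ne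
    · exact absurd h3 D.Ep
  refine ⟨?_, ht⟩
  rw [ht, zero_smul, add_zero] at hst
  refine (smul_eq_zero.1 hst).resolve_right ?_
  rintro rfl
  exact D.Ep (smul_zero _)

theorem chainU_mem (h : Alg k N q qb K G E F) (D : PData k q qb K G E F κ lw w y p) (p0 : 0 < p)
    (pN : p < N) (j : ℕ) :
    (if j < p then E ^ j • w else E ^ (j - p) • y) ∈ Submodule.span R {y} := by
  split_ifs
  · exact Submodule.smul_mem _ _ (h.w_mem' D p0 pN)
  · exact Submodule.smul_mem _ _ (Submodule.mem_span_singleton_self y)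

theorem chainV_mem (h : Alg k N q qb K G E F) (D : PData k q qb K G E F κ lw w y p) (p0 : 0 < p)
    (pN : p < N) (j : ℕ) :
    (if j < N - p then E ^ (j + p) • w else E ^ j • y) ∈ Submodule.span R {y} := by
  split_ifs
  · exact Submodule.smul_mem _ _ (h.w_mem' D p0 pN)
  · exact Submodule.smul_mem _ _ (Submodule.mem_span_singleton_self y)

/-- lower bound for the dimension -/
theorem lower (h : Alg k N q qb K G E F) (D : PData k q qb K G E F κ lw w y p) (p0 : 0 < p)
    (pN : p < N) (p2 : 2 * p ≠ N) [Module.Finite k (Submodule.span R {y})] :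
    2 * N ≤ Module.finrank k (Submodule.span R {y}) := by
  have hl := chain_li (k := k) (F := F) (ι := Fin 2) (fun _ => N)
    ![fun j => if j < p then E ^ j • w else E ^ (j - p) • y,
      fun j => if j < N - p then E ^ (j + p) • w else E ^ j • y] (by
    intro i; fin_cases i
    · exact h.chainU D p0 pN
    · exact h.chainV D p0 pN) (by
    convert h.li_two D p0 pN p2 using 1
    funext i
    fin_cases i
    · simp [p0]
    · simp [show 0 < N - p by omega])
  have hmem : ∀ x : (Σ _ : Fin 2, Fin N), (![fun j => if j < p then E ^ j • w else E ^ (j - p) • y,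
      fun j => if j < N - p then E ^ (j + p) • w else E ^ j • y] : Fin 2 → ℕ → M) x.1 x.2
      ∈ Submodule.span R {y} := by
    rintro ⟨i, j⟩
    fin_cases i
    · exact h.chainU_mem D p0 pN j
    · exact h.chainV_mem D p0 pN j
  have hl2 : LinearIndependent k (fun x : (Σ _ : Fin 2, Fin N) =>
      (⟨_, hmem x⟩ : Submodule.span R {y})) := by
    apply LinearIndependent.of_comp ((Submodule.span R {y}).subtype.restrictScalars k)
    exact hl
  have := hl2.fintype_card_le_finrank
  simpa [two_mul] using this

theorem upper (h : Alg k N q qb K G E F) {κ l c : k} {v : M} (hv : Wt K G κ l v)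
    (hF : F ^ (p + 1) • v = 0) (hc : F • v = c • E ^ (p - 1) • F ^ p • v) :
    Module.Finite k (Submodule.span R {v}) ∧
      Module.finrank k (Submodule.span R {v}) ≤ 2 * N := by
  let x : Fin N ⊕ Fin N → M := Sum.elim (fun j => E ^ (j : ℕ) • v) (fun j => E ^ (j : ℕ) • F ^ p • v)
  have m1 : ∀ j : ℕ, E ^ j • v ∈ Submodule.span k (Set.range x) := by
    intro j
    by_cases hj : j < N
    · exact Submodule.subset_span ⟨Sum.inl ⟨j, hj⟩, rfl⟩
    · rw [h.EN_ge (by omega), zero_smul]; exact Submodule.zero_mem _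
  have m2 : ∀ j : ℕ, E ^ j • F ^ p • v ∈ Submodule.span k (Set.range x) := by
    intro j
    by_cases hj : j < N
    · exact Submodule.subset_span ⟨Sum.inr ⟨j, hj⟩, rfl⟩
    · rw [h.EN_ge (by omega), zero_smul]; exact Submodule.zero_mem _
  have hv' := h.wtFp hv p
  have e : (Submodule.span R {v}).restrictScalars k = Submodule.span k (Set.range x) := by
    apply h.span_eq
    · rintro (j | j)
      · simp only [x, Sum.elim_inl]; rw [(h.wtEp hv j).1]; exact Submodule.smul_mem _ _ (m1 j)
      · simp only [x, Sum.elim_inr]; rw [(h.wtEp hv' j).1]; exact Submodule.smul_mem _ _ (m2 j)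
    · rintro (j | j)
      · simp only [x, Sum.elim_inl]; rw [(h.wtEp hv j).2]; exact Submodule.smul_mem _ _ (m1 j)
      · simp only [x, Sum.elim_inr]; rw [(h.wtEp hv' j).2]; exact Submodule.smul_mem _ _ (m2 j)
    · rintro (j | j)
      · simp only [x, Sum.elim_inl]; rw [← mul_smul, ← pow_succ']; exact m1 _
      · simp only [x, Sum.elim_inr]; rw [← mul_smul, ← pow_succ']; exact m2 _
    · rintro (⟨j, hj⟩ | ⟨j, hj⟩)
      · simp only [x, Sum.elim_inl]
        cases j with
        | zero => rw [pow_zero, one_smul, hc]; exact Submodule.smul_mem _ _ (m2 _)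
        | succ j =>
          rw [h.FEp hv j, hc, smul_comm (E ^ (j + 1)) c (_ : M), ← mul_smul (E ^ (j + 1)), ← pow_add]
          exact Submodule.add_mem _ (Submodule.smul_mem _ _ (Submodule.smul_mem _ _ (m2 _)))
            (Submodule.smul_mem _ _ (m1 _))
      · simp only [x, Sum.elim_inr]
        have hF' : F • F ^ p • v = 0 := by rw [← mul_smul, ← pow_succ', hF]
        cases j with
        | zero => rw [pow_zero, one_smul, hF']; exact Submodule.zero_mem _
        | succ j =>
          rw [h.FEp hv' j, hF', smul_zero, smul_zero, zero_add]
          exact (Submodule.smul_mem _ _ (m2 _))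
    · simpa using m1 0
    · have := Submodule.mem_span_singleton_self (R := R) v
      rintro (j | j)
      · exact Submodule.smul_mem _ _ this
      · exact Submodule.smul_mem _ _ (Submodule.smul_mem _ _ this)
  have h1 : Module.Finite k ((Submodule.span R {v}).restrictScalars k) := by
    rw [e]; exact Module.Finite.span_of_finite k (Set.finite_range x)
  have h2 : Module.finrank k ((Submodule.span R {v}).restrictScalars k) ≤ 2 * N := by
    rw [e]
    refine (finrank_range_le_card x).trans ?_
    simp [two_mul]
  exact ⟨h1, h2⟩

theorem proj_main [CharZero k] (h : Alg k N q qb K G E F) (D : PData k q qb K G E F κ lw w y p)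
    (p0 : 0 < p) (pN : p < N) (p2 : 2 * p ≠ N) :
    Module.Projective R (Submodule.span R {y}) ∧
      Module.finrank k (Submodule.span R {y}) = 2 * N := by
  have hl' := h.lz D (N - p) (by omega)
  have y0 : y ≠ 0 := by
    rintro rfl
    have e := D.Fy
    rw [smul_zero] at e
    apply D.Ep
    have : p = 1 + (p - 1) := by omega
    rw [this, pow_add, mul_smul, ← e, smul_zero]
  obtain ⟨v, hv, hvy, hF, c, hc⟩ := h.core p (N - p) p0 (by omega) (by omega) hl' D.hy y0 (by
    have : p - 1 + 1 = p := by omega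
    rw [D.Fy, ← mul_smul E (E ^ (p - 1)), ← pow_succ', this, h.Fz D p0, smul_zero])
  obtain ⟨fin, up⟩ := h.upper (M := R) (p := p) (c := c) hv hF
    (by simp only [smul_eq_mul]; rw [hc, mul_assoc])
  let φ : R →ₗ[R] Submodule.span R {y} :=
    LinearMap.toSpanSingleton R _ ⟨y, Submodule.mem_span_singleton_self y⟩
  let ψ : Submodule.span R {v} →ₗ[R] Submodule.span R {y} := φ.comp (Submodule.subtype _)
  have hψ : Function.Surjective ψ := by
    rintro ⟨z, hz⟩
    obtain ⟨r, rfl⟩ := Submodule.mem_span_singleton.1 hz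
    refine ⟨⟨r * v, Submodule.smul_mem _ r (Submodule.mem_span_singleton_self v)⟩, ?_⟩
    ext
    simp [ψ, φ, mul_smul, hvy]
  have fin2 : Module.Finite k (Submodule.span R {y}) :=
    Module.Finite.of_surjective (ψ.restrictScalars k) hψ
  have low := h.lower D p0 pN p2
  have le : Module.finrank k (Submodule.span R {y}) ≤ Module.finrank k (Submodule.span R {v}) :=
    LinearMap.finrank_le_finrank_of_surjective (f := ψ.restrictScalars k) hψ
  have heq : Module.finrank k (Submodule.span R {v}) = Module.finrank k (Submodule.span R {y}) := by
    omega
  have inj : Function.Injective ψ :=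
    (LinearMap.injective_iff_surjective_of_finrank_eq_finrank (f := ψ.restrictScalars k) heq).2 hψ
  let e := LinearEquiv.ofBijective ψ ⟨inj, hψ⟩
  refine ⟨Module.Projective.of_split ((Submodule.subtype _).comp e.symm.toLinearMap) φ ?_, by omega⟩
  ext z : 1
  exact e.apply_symm_apply z

end Alg
end
end QFL

namespace QFL
set_option linter.unusedSectionVars false

/-- A module with a grid basis `B r s`, `r < a`, `s < b`, and coordinate functions `co r s`. -/
structure Grid (k : Type) {R M : Type} [Field k] [Ring R] [AddCommGroup M] [Module k M]
    [Module R M] (q qb κ0 : k) (K G E F : R) (a b : ℕ) (B : ℕ → ℕ → M)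
    (al be al' be' : ℕ → ℕ → k) (co : ℕ → ℕ → M →ₗ[k] k) : Prop where
  B0 : ∀ r s, ¬ (r < a ∧ s < b) → B r s = 0
  co0 : ∀ r s, ¬ (r < a ∧ s < b) → co r s = 0
  coB : ∀ r s r' s', r < a → s < b → co r s (B r' s') = if r' = r ∧ s' = s then 1 else 0
  ex : ∀ v, v = ∑ r ∈ Finset.range a, ∑ s ∈ Finset.range b, co r s v • B r s
  wt : ∀ r s, Wt K G (qb ^ (r + s) * κ0) ((q ^ 2)⁻¹ ^ (r + s) * q ^ (a + b - 2)) (B r s)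
  hF : ∀ r s, r < a → s < b → F • B r s = al r s • B (r - 1) s + be r s • B r (s - 1)
  hE : ∀ r s, r < a → s < b → E • B r s = al' r s • B (r + 1) s + be' r s • B r (s + 1)
  al0 : ∀ s, al 0 s = 0
  be0 : ∀ r, be r 0 = 0
  alne : ∀ r s, r < a → s < b → 0 < r → al r s ≠ 0
  bene : ∀ r s, r < a → s < b → 0 < s → be r s ≠ 0
  be'ne : ∀ r s, r < a → s + 1 < b → be' r s ≠ 0
  fin : Module.Finite k M
  fr : Module.finrank k M = a * b

section
variable {k R M : Type} [Field k] [Ring R] [Algebra k R] [AddCommGroup M] [Module k M]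
  [Module R M] [IsScalarTower k R M] {N : ℕ} {q qb : k} {K G E F : R}
  {κ0 : k} {a b : ℕ} {B : ℕ → ℕ → M} {al be al' be' : ℕ → ℕ → k} {co : ℕ → ℕ → M →ₗ[k] k}

/-- level -/
def Lv (co : ℕ → ℕ → M →ₗ[k] k) (l : ℕ) (v : M) : Prop := ∀ r s, r + s ≠ l → co r s v = 0

namespace Grid

theorem zero_of (g : Grid k q qb κ0 K G E F a b B al be al' be' co) {v : M}
    (h : ∀ r s, r < a → s < b → co r s v = 0) : v = 0 := by
  rw [g.ex v]
  apply Finset.sum_eq_zero; intro r hr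
  apply Finset.sum_eq_zero; intro s hs
  rw [h r s (Finset.mem_range.1 hr) (Finset.mem_range.1 hs), zero_smul]

theorem ext_B (g : Grid k q qb κ0 K G E F a b B al be al' be' co) {W : Type} [AddCommGroup W]
    [Module k W] (f f' : M →ₗ[k] W) (h : ∀ r s, r < a → s < b → f (B r s) = f' (B r s)) (v : M) :
    f v = f' v := by
  rw [g.ex v]
  simp only [map_sum, map_smul]
  apply Finset.sum_congr rfl; intro r hr
  apply Finset.sum_congr rfl; intro s hs
  rw [h r s (Finset.mem_range.1 hr) (Finset.mem_range.1 hs)]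

theorem coF (g : Grid k q qb κ0 K G E F a b B al be al' be' co) (r s : ℕ) (hr : r < a) (hs : s < b)
    (v : M) : co r s (F • v) = al (r + 1) s * co (r + 1) s v + be r (s + 1) * co r (s + 1) v := by
  refine g.ext_B ((co r s).comp (Algebra.lsmul k k M F))
    (al (r + 1) s • co (r + 1) s + be r (s + 1) • co r (s + 1)) ?_ v
  intro r' s' hr' hs'
  simp only [LinearMap.comp_apply, Algebra.lsmul_coe, LinearMap.add_apply, LinearMap.smul_apply,
    smul_eq_mul, g.hF r' s' hr' hs', map_add, map_smul, g.coB r s _ _ hr hs]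
  congr 1
  · by_cases h0 : r' = 0
    · subst h0
      rw [g.al0, zero_mul]
      by_cases h1 : r + 1 < a
      · rw [g.coB _ _ _ _ h1 hs, if_neg (by omega), mul_zero]
      · rw [g.co0 _ _ (by omega), LinearMap.zero_apply, mul_zero]
    · by_cases h1 : r + 1 < a
      · rw [g.coB _ _ _ _ h1 hs]
        by_cases h2 : r' = r + 1 ∧ s' = s
        · rw [if_pos h2, if_pos (by omega), h2.1, h2.2]
        · rw [if_neg h2, if_neg (by omega), mul_zero, mul_zero]
      · rw [g.co0 _ _ (by omega), LinearMap.zero_apply, mul_zero, if_neg (by omega), mul_zero]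
  · by_cases h0 : s' = 0
    · subst h0
      rw [g.be0, zero_mul]
      by_cases h1 : s + 1 < b
      · rw [g.coB _ _ _ _ hr h1, if_neg (by omega), mul_zero]
      · rw [g.co0 _ _ (by omega), LinearMap.zero_apply, mul_zero]
    · by_cases h1 : s + 1 < b
      · rw [g.coB _ _ _ _ hr h1]
        by_cases h2 : r' = r ∧ s' = s + 1
        · rw [if_pos h2, if_pos (by omega), h2.1, h2.2]
        · rw [if_neg h2, if_neg (by omega), mul_zero, mul_zero]
      · rw [g.co0 _ _ (by omega), LinearMap.zero_apply, mul_zero, if_neg (by omega), mul_zero]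

theorem coE (g : Grid k q qb κ0 K G E F a b B al be al' be' co) (r s : ℕ) (hr : r < a) (hs : s < b)
    (v : M) : co r s (E • v) = (if r = 0 then 0 else al' (r - 1) s * co (r - 1) s v)
      + (if s = 0 then 0 else be' r (s - 1) * co r (s - 1) v) := by
  have key := g.ext_B ((co r s).comp (Algebra.lsmul k k M E))
    ((if r = 0 then 0 else al' (r - 1) s) • co (r - 1) s +
      (if s = 0 then 0 else be' r (s - 1)) • co r (s - 1)) ?_ v
  · simp only [LinearMap.comp_apply, Algebra.lsmul_coe, LinearMap.add_apply, LinearMap.smul_apply,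
      smul_eq_mul] at key
    rw [key]
    congr 1 <;> split_ifs <;> simp
  intro r' s' hr' hs'
  simp only [LinearMap.comp_apply, Algebra.lsmul_coe, LinearMap.add_apply, LinearMap.smul_apply,
    smul_eq_mul, g.hE r' s' hr' hs', map_add, map_smul, g.coB r s _ _ hr hs,
    g.coB (r - 1) s _ _ (lt_of_le_of_lt (Nat.sub_le _ _) hr) hs,
    g.coB r (s - 1) _ _ hr (lt_of_le_of_lt (Nat.sub_le _ _) hs)]
  congr 1
  · by_cases h0 : r = 0
    · rw [if_pos h0, if_neg (by omega), zero_mul, mul_zero]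
    · rw [if_neg h0]
      by_cases h2 : r' = r - 1 ∧ s' = s
      · rw [if_pos h2, if_pos (by omega), h2.1, h2.2]
      · rw [if_neg h2, if_neg (by omega), mul_zero, mul_zero]
  · by_cases h0 : s = 0
    · rw [if_pos h0, if_neg (by omega), zero_mul, mul_zero]
    · rw [if_neg h0]
      by_cases h2 : r' = r ∧ s' = s - 1
      · rw [if_pos h2, if_pos (by omega), h2.1, h2.2]
      · rw [if_neg h2, if_neg (by omega), mul_zero, mul_zero]

theorem lvE (g : Grid k q qb κ0 K G E F a b B al be al' be' co) {l : ℕ} {v : M} (hv : Lv co l v) :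
    Lv co (l + 1) (E • v) := by
  intro r s hrs
  by_cases h : r < a ∧ s < b
  · rw [g.coE r s h.1 h.2]
    have h1 : (if r = 0 then 0 else al' (r - 1) s * co (r - 1) s v) = 0 := by
      split_ifs
      · rfl
      · rw [hv (r - 1) s (by omega), mul_zero]
    have h2 : (if s = 0 then 0 else be' r (s - 1) * co r (s - 1) v) = 0 := by
      split_ifs
      · rfl
      · rw [hv r (s - 1) (by omega), mul_zero]
    rw [h1, h2, add_zero]
  · rw [g.co0 r s h]; rfl

theorem lvEp (g : Grid k q qb κ0 K G E F a b B al be al' be' co) {l : ℕ} {v : M} (hv : Lv co l v)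
    (j : ℕ) : Lv co (l + j) (E ^ j • v) := by
  induction j with
  | zero => simpa using hv
  | succ j ih => rw [pow_succ', mul_smul]; exact g.lvE ih

theorem lv_expand (g : Grid k q qb κ0 K G E F a b B al be al' be' co) {l : ℕ} {v : M}
    (hv : Lv co l v) : v = ∑ r ∈ Finset.range (l + 1), co r (l - r) v • B r (l - r) := by
  rw [← sub_eq_zero]
  apply g.zero_of
  intro r s hr hs
  simp only [map_sub, map_sum, map_smul, smul_eq_mul, g.coB r s _ _ hr hs]
  by_cases h : r + s = l
  · rw [Finset.sum_eq_single r]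
    · have : l - r = s := by omega
      simp [this]
    · intro r' _ hr'; rw [if_neg (by omega), mul_zero]
    · intro h'; exact absurd (Finset.mem_range.2 (by omega)) h'
  · rw [hv r s h, Finset.sum_eq_zero, sub_zero]
    intro r' hr'
    have := Finset.mem_range.1 hr'
    rw [if_neg (by omega), mul_zero]

theorem lv_wt (g : Grid k q qb κ0 K G E F a b B al be al' be' co) {l : ℕ} {v : M}
    (hv : Lv co l v) : Wt K G (qb ^ l * κ0) ((q ^ 2)⁻¹ ^ l * q ^ (a + b - 2)) v := by
  have e := g.lv_expand hv
  generalize (fun r => co r (l - r) v) = c at e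
  constructor <;>
  · rw [e, Finset.smul_sum, Finset.smul_sum]
    apply Finset.sum_congr rfl
    intro r hr
    have h1 := Finset.mem_range.1 hr
    have h2 : r + (l - r) = l := by omega
    have h3 := g.wt r (l - r)
    rw [h2] at h3
    first
    | rw [smul_comm, h3.1, smul_comm]
    | rw [smul_comm, h3.2, smul_comm]

theorem surj_B (g : Grid k q qb κ0 K G E F a b B al be al' be' co) {l : ℕ} (hl : l < b) (r : ℕ)
    (hr : r < l) : ∃ v, Lv co l v ∧ (∀ r' s, r < r' → co r' s v = 0) ∧
      F • v = B r (l - 1 - r) := by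
  induction r with
  | zero =>
    by_cases ha : 0 < a
    · refine ⟨(be 0 l)⁻¹ • B 0 l, ?_, ?_, ?_⟩
      · intro r' s h
        by_cases h' : r' < a ∧ s < b
        · rw [map_smul, g.coB _ _ _ _ h'.1 h'.2, if_neg (by omega), smul_zero]
        · rw [g.co0 _ _ h']; rfl
      · intro r' s h
        by_cases h' : r' < a ∧ s < b
        · rw [map_smul, g.coB _ _ _ _ h'.1 h'.2, if_neg (by omega), smul_zero]
        · rw [g.co0 _ _ h']; rfl
      · rw [smul_comm, g.hF 0 l ha hl, g.al0, zero_smul, zero_add, smul_smul,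
          inv_mul_cancel₀ (g.bene 0 l ha hl (by omega)), one_smul, Nat.sub_zero]
    · refine ⟨0, fun _ _ _ => map_zero _, fun _ _ _ => map_zero _, ?_⟩
      rw [g.B0 _ _ (by omega), smul_zero]
  | succ r ih =>
    obtain ⟨v, hv1, hv2, hv3⟩ := ih (by omega)
    by_cases ha : r + 1 < a
    · have hb : l - (r + 1) < b := by omega
      have hbe := g.bene (r + 1) (l - (r + 1)) ha hb (by omega)
      refine ⟨(be (r + 1) (l - (r + 1)))⁻¹ • (B (r + 1) (l - (r + 1))
        - al (r + 1) (l - (r + 1)) • v), ?_, ?_, ?_⟩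
      · intro r' s h
        by_cases h' : r' < a ∧ s < b
        · rw [map_smul, map_sub, map_smul, g.coB _ _ _ _ h'.1 h'.2, hv1 r' s h, if_neg (by omega)]
          simp
        · rw [g.co0 _ _ h']; rfl
      · intro r' s h
        by_cases h' : r' < a ∧ s < b
        · rw [map_smul, map_sub, map_smul, g.coB _ _ _ _ h'.1 h'.2, hv2 r' s (by omega),
            if_neg (by omega)]
          simp
        · rw [g.co0 _ _ h']; rfl
      · have e1 : l - 1 - r = l - (r + 1) := by omega
        have e2 : l - (r + 1) - 1 = l - 1 - (r + 1) := by omega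
        rw [smul_comm, smul_sub, smul_comm F (al _ _) v, hv3, g.hF _ _ ha hb, e1, e2,
          Nat.add_sub_cancel, add_sub_cancel_left, smul_smul, inv_mul_cancel₀ hbe, one_smul]
    · refine ⟨0, fun _ _ _ => map_zero _, fun _ _ _ => map_zero _, ?_⟩
      rw [g.B0 _ _ (by omega), smul_zero]

theorem surj (g : Grid k q qb κ0 K G E F a b B al be al' be' co) {l : ℕ} (hl : l + 1 < b) {u : M}
    (hu : Lv co l u) : ∃ y, Lv co (l + 1) y ∧ F • y = u := by
  have := fun r : ℕ => fun hr : r < l + 1 => g.surj_B hl r hr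
  choose! v h1 h2 h3 using this
  refine ⟨∑ r ∈ Finset.range (l + 1), co r (l - r) u • v r, ?_, ?_⟩
  · intro r s h
    rw [map_sum]
    apply Finset.sum_eq_zero
    intro r' hr'
    rw [map_smul, h1 r' (Finset.mem_range.1 hr') r s h, smul_zero]
  · conv_rhs => rw [g.lv_expand hu]
    rw [Finset.smul_sum]
    apply Finset.sum_congr rfl
    intro r hr
    rw [smul_comm, h3 r (Finset.mem_range.1 hr), Nat.add_sub_cancel]

theorem low_ex (g : Grid k q qb κ0 K G E F a b B al be al' be' co) {t : ℕ} (ht : t < a)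
    (ht' : t < b) : ∃ w, Lv co t w ∧ w ≠ 0 ∧ F • w = 0 := by
  have hB : Lv co t (B t 0) := by
    intro r s h
    by_cases h' : r < a ∧ s < b
    · rw [g.coB _ _ _ _ h'.1 h'.2, if_neg (by omega)]
    · rw [g.co0 _ _ h']; rfl
  have h1 : co t 0 (B t 0) = 1 := by rw [g.coB _ _ _ _ ht (by omega), if_pos ⟨rfl, rfl⟩]
  cases t with
  | zero =>
    refine ⟨B 0 0, hB, ?_, ?_⟩
    · intro h; rw [h, map_zero] at h1; exact zero_ne_one h1
    · rw [g.hF _ _ ht ht', g.al0, g.be0]; simp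
  | succ t =>
    obtain ⟨v, hv1, hv2, hv3⟩ := g.surj_B ht' t (by omega)
    refine ⟨B (t + 1) 0 - al (t + 1) 0 • v, ?_, ?_, ?_⟩
    · intro r s h
      rw [map_sub, map_smul, hB r s h, hv1 r s h]; simp
    · intro h
      have := congrArg (co (t + 1) 0) h
      rw [map_sub, map_smul, h1, hv2 (t + 1) 0 (by omega)] at this
      simp at this
    · rw [smul_sub, g.hF _ _ ht (by omega), g.be0, smul_comm F _ v, hv3]
      have : t + 1 - 1 - t = 0 := by omega
      rw [this]; simp

theorem injF (g : Grid k q qb κ0 K G E F a b B al be al' be' co) {l : ℕ} (hl : b ≤ l) {v : M}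
    (hv : Lv co l v) (h0 : F • v = 0) : v = 0 := by
  have key : ∀ r s, r + s = l → co r s v = 0 := by
    intro r
    induction r with
    | zero => intro s hs; rw [g.co0 _ _ (by omega)]; rfl
    | succ r ih =>
      intro s hs
      by_cases h : r + 1 < a ∧ s < b
      · have := g.coF r s (by omega) h.2 v
        rw [h0, map_zero, ih (s + 1) (by omega), mul_zero, add_zero] at this
        exact (mul_eq_zero.1 this.symm).resolve_left (g.alne _ _ h.1 h.2 (by omega))
      · rw [g.co0 _ _ h]; rfl
  apply g.zero_of
  intro r s _ _
  by_cases h : r + s = l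
  · exact key r s h
  · exact hv r s h

theorem injE (g : Grid k q qb κ0 K G E F a b B al be al' be' co) {l : ℕ} (hl : l + 1 < b) {v : M}
    (hv : Lv co l v) (h0 : E • v = 0) : v = 0 := by
  have key : ∀ r s, r < a → r + s = l → co r s v = 0 := by
    intro r
    induction r with
    | zero =>
      intro s ha hs
      have := g.coE 0 (s + 1) ha (by omega) v
      rw [h0, map_zero, if_pos rfl, if_neg (by omega), zero_add, Nat.add_sub_cancel] at this
      exact (mul_eq_zero.1 this.symm).resolve_left (g.be'ne _ _ ha (by omega))
    | succ r ih =>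
      intro s ha hs
      have := g.coE (r + 1) (s + 1) ha (by omega) v
      rw [h0, map_zero, if_neg (by omega), if_neg (by omega), Nat.add_sub_cancel,
        Nat.add_sub_cancel, ih (s + 1) (by omega) (by omega), mul_zero, zero_add] at this
      exact (mul_eq_zero.1 this.symm).resolve_left (g.be'ne _ _ ha (by omega))
  apply g.zero_of
  intro r s hr _
  by_cases h : r + s = l
  · exact key r s hr h
  · exact hv r s h

theorem injEp (g : Grid k q qb κ0 K G E F a b B al be al' be' co) {l : ℕ} (j : ℕ) (hl : l + j < b)
    {v : M} (hv : Lv co l v) (h0 : v ≠ 0) : E ^ j • v ≠ 0 := by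
  induction j with
  | zero => simpa using h0
  | succ j ih =>
    intro h
    rw [pow_succ', mul_smul] at h
    exact ih (by omega) (g.injE (by omega) (g.lvEp hv j) h)

theorem lv_li (g : Grid k q qb κ0 K G E F a b B al be al' be' co) {m : ℕ} (x : Fin m → M)
    (hx : ∀ t : Fin m, Lv co (t : ℕ) (x t)) (h0 : ∀ t, x t ≠ 0) : LinearIndependent k x := by
  rw [Fintype.linearIndependent_iff]
  intro c hc t
  by_contra hct
  apply h0 t
  apply g.zero_of
  intro r s _ _
  by_cases h : r + s = t
  · have := congrArg (co r s) hc
    rw [map_sum, map_zero, Finset.sum_eq_single t] at this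
    · rw [map_smul] at this
      exact (mul_eq_zero.1 this).resolve_left hct
    · intro t' _ ht'
      rw [map_smul, hx t' r s (fun h' => ht' (Fin.ext (by omega))), smul_zero]
    · simp
  · exact hx t r s h

end Grid

theorem sum_lemma_aux (a b m : ℕ) (hma : m ≤ a) (hmb : m ≤ b) :
    ∑ t ∈ Finset.range m, (a + b - 1 - 2 * t) = m * (a + b - m) := by
  induction m with
  | zero => simp
  | succ m ih =>
    rw [Finset.sum_range_succ, ih (by omega) (by omega)]
    obtain ⟨a, rfl⟩ := Nat.exists_eq_add_of_le hma
    obtain ⟨b, rfl⟩ := Nat.exists_eq_add_of_le hmb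
    have e1 : m + 1 + a + (m + 1 + b) - m = m + 2 + a + b := by omega
    have e2 : m + 1 + a + (m + 1 + b) - (m + 1) = m + 1 + a + b := by omega
    have e3 : m + 1 + a + (m + 1 + b) - 1 - 2 * m = 1 + a + b := by omega
    rw [e1, e2, e3]; ring

theorem sum_lemma (a b N : ℕ) (f : ℕ → ℕ) (ha : a ≤ N) (hb : b ≤ N)
    (h1 : ∀ t, a + b - N ≤ t → t < min a b → f t = a + b - 1 - 2 * t)
    (h2 : ∀ t, t < a + b - N → f t + f (a + b - N - 1 - t) = 2 * N) :
    ∑ t ∈ Finset.range (min a b), f t = a * b := by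
  have hH : a + b - N ≤ min a b := by omega
  have e1 : ∑ t ∈ Finset.range (min a b), (a + b - 1 - 2 * t) = a * b := by
    rw [sum_lemma_aux a b _ (by omega) (by omega)]
    rcases le_total a b with h | h
    · rw [min_eq_left h, Nat.add_sub_cancel_left]
    · rw [min_eq_right h, Nat.add_sub_cancel, mul_comm]
  have e2 : ∑ t ∈ Finset.range (a + b - N), f t = (a + b - N) * N := by
    have := Finset.sum_range_reflect f (a + b - N)
    have h3 : ∑ t ∈ Finset.range (a + b - N), (f t + f (a + b - N - 1 - t)) = (a + b - N) * (2 * N) := by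
      rw [Finset.sum_congr rfl (fun t ht => h2 t (Finset.mem_range.1 ht))]; simp
    rw [Finset.sum_add_distrib, this] at h3
    linarith
  have e3 : ∑ t ∈ Finset.range (a + b - N), (a + b - 1 - 2 * t) = (a + b - N) * N := by
    rw [sum_lemma_aux a b _ (by omega) (by omega)]
    by_cases h : a + b ≤ N
    · have : a + b - N = 0 := by omega
      rw [this]; simp
    · congr 1; omega
  rw [← e1, ← Finset.sum_range_add_sum_Ico _ hH, ← Finset.sum_range_add_sum_Ico _ hH, e2, e3]
  congr 1
  apply Finset.sum_congr rfl
  intro t ht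
  have := Finset.mem_Ico.1 ht
  exact h1 t this.1 this.2

end
end QFL

namespace QFL
set_option linter.unusedSectionVars false

/-- A linear map which is a sum of a map with semisimple image and of a map factoring through a
projective module. -/
def Good {R M M' : Type} [Ring R] [AddCommGroup M] [Module R M] [AddCommGroup M'] [Module R M']
    (f : M →ₗ[R] M') : Prop :=
  ∃ fT fQ : M →ₗ[R] M', f = fT + fQ ∧ IsSemisimpleModule R (LinearMap.range fT) ∧
    ∃ (Q : Type) (_ : AddCommGroup Q) (_ : Module R Q) (_ : Module.Projective R Q)
      (i : Q →ₗ[R] M') (p : M →ₗ[R] Q), fQ = i.comp p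

section
variable {R M M' M'' : Type} [Ring R] [AddCommGroup M] [Module R M] [AddCommGroup M'] [Module R M']
  [AddCommGroup M''] [Module R M'']

theorem ss_bot (h : Subsingleton M) : IsSemisimpleModule R M :=
  IsSemisimpleModule.of_sSup_simples_eq_top (Subsingleton.elim _ _)

theorem ss_mono {A B : Submodule R M} (h : A ≤ B) (hB : IsSemisimpleModule R B) :
    IsSemisimpleModule R A :=
  IsSemisimpleModule.of_injective (Submodule.inclusion h) (Submodule.inclusion_injective h)

theorem Good.add {f g : M →ₗ[R] M'} (hf : Good f) (hg : Good g) : Good (f + g) := by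
  obtain ⟨f1, f2, rfl, hs, Q, _, _, _, i, p, rfl⟩ := hf
  obtain ⟨g1, g2, rfl, hs', Q', _, _, _, i', p', rfl⟩ := hg
  refine ⟨f1 + g1, i.comp p + i'.comp p', by abel, ?_, Q × Q', inferInstance, inferInstance,
    inferInstance, i.coprod i', p.prod p', ?_⟩
  · refine ss_mono ?_ (IsSemisimpleModule.sup hs hs')
    rintro _ ⟨x, rfl⟩
    exact Submodule.add_mem_sup ⟨x, rfl⟩ ⟨x, rfl⟩
  · ext x; simp

theorem Good.zero : Good (0 : M →ₗ[R] M') := by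
  refine ⟨0, 0, by simp, ?_, PUnit, inferInstance, inferInstance, inferInstance, 0, 0, by simp⟩
  rw [LinearMap.range_zero]; exact ss_bot inferInstance

theorem Good.sum {ι : Type} (s : Finset ι) (f : ι → M →ₗ[R] M') (h : ∀ i ∈ s, Good (f i)) :
    Good (∑ i ∈ s, f i) := by
  classical
  induction s using Finset.induction_on with
  | empty => simpa using Good.zero
  | insert a s ha ih =>
    rw [Finset.sum_insert ha]
    exact (h a (by simp)).add (ih (fun i hi => h i (by simp [hi])))

theorem Good.comp_left {f : M →ₗ[R] M'} (hf : Good f) (g : M' →ₗ[R] M'') : Good (g.comp f) := by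
  obtain ⟨f1, f2, rfl, hs, Q, _, _, _, i, p, rfl⟩ := hf
  refine ⟨g.comp f1, g.comp (i.comp p), by rw [LinearMap.comp_add], ?_, Q, _, _, ‹_›, g.comp i, p,
    by rw [LinearMap.comp_assoc]⟩
  rw [LinearMap.range_comp]
  exact IsSemisimpleModule.of_surjective (g.submoduleMap (LinearMap.range f1))
    (LinearMap.submoduleMap_surjective _ _)

theorem Good.comp_right {f : M' →ₗ[R] M''} (hf : Good f) (g : M →ₗ[R] M') : Good (f.comp g) := by
  obtain ⟨f1, f2, rfl, hs, Q, _, _, _, i, p, rfl⟩ := hf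
  refine ⟨f1.comp g, (i.comp p).comp g, by rw [LinearMap.add_comp], ?_, Q, _, _, ‹_›, i, p.comp g,
    by rw [LinearMap.comp_assoc]⟩
  exact ss_mono (LinearMap.range_comp_le_range _ _) hs

theorem Good.ss (h : IsSemisimpleModule R M) : Good (LinearMap.id : M →ₗ[R] M) := by
  refine ⟨LinearMap.id, 0, by simp, ?_, PUnit, inferInstance, inferInstance, inferInstance, 0, 0,
    by simp⟩
  infer_instance

theorem Good.pr (h : Module.Projective R M) : Good (LinearMap.id : M →ₗ[R] M) := by
  refine ⟨0, LinearMap.id, by simp, ?_, M, inferInstance, inferInstance, inferInstance,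
    LinearMap.id, LinearMap.id, by simp⟩
  rw [LinearMap.range_zero]; exact ss_bot inferInstance

theorem good_of_family {k : Type} [Field k] [Algebra k R] [Module k M] [IsScalarTower k R M]
    [Module.Finite k M] {ι : Type} [Fintype ι] (Nt : ι → Submodule R M) (ht : ⨆ i, Nt i = ⊤)
    (hs : ∑ i, Module.finrank k (Nt i) = Module.finrank k M)
    (hg : ∀ i, Good (LinearMap.id : Nt i →ₗ[R] Nt i)) : Good (LinearMap.id : M →ₗ[R] M) := by
  classical
  have hfin : ∀ i, Module.Finite k (Nt i) := fun i =>
    Module.Finite.of_injective ((Nt i).subtype.restrictScalars k) Subtype.val_injective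
  let Φ : (Π i, Nt i) →ₗ[R] M := LinearMap.lsum R (fun i => Nt i) ℕ (fun i => (Nt i).subtype)
  have hΦ : ∀ x, Φ x = ∑ i, (x i : M) := by intro x; simp [Φ]
  have surj : Function.Surjective Φ := by
    rw [← LinearMap.range_eq_top, ← top_le_iff, ← ht, iSup_le_iff]
    intro i x hx
    refine ⟨Pi.single i ⟨x, hx⟩, ?_⟩
    rw [hΦ, Finset.sum_eq_single i]
    · simp
    · intro j _ hj; rw [Pi.single_eq_of_ne hj]; rfl
    · simp
  have inj : Function.Injective Φ := by
    refine (LinearMap.injective_iff_surjective_of_finrank_eq_finrank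
      (f := Φ.restrictScalars k) ?_).2 surj
    rw [Module.finrank_pi_fintype, hs]
  let e := LinearEquiv.ofBijective Φ ⟨inj, surj⟩
  have hid : (LinearMap.id : M →ₗ[R] M) = ∑ i, (Nt i).subtype.comp (LinearMap.id.comp
      ((LinearMap.proj i).comp e.symm.toLinearMap)) := by
    ext v
    obtain ⟨x, rfl⟩ := e.surjective v
    simp only [LinearMap.sum_apply, LinearMap.comp_apply, LinearMap.id_apply, LinearMap.proj_apply,
      LinearEquiv.coe_coe, LinearEquiv.symm_apply_apply, Submodule.subtype_apply]
    exact hΦ x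
  rw [hid]
  exact Good.sum _ _ (fun i _ => ((hg i).comp_right _).comp_left _)

end

section
variable {k R M : Type} [Field k] [Ring R] [Algebra k R] [AddCommGroup M] [Module k M]
  [Module R M] [IsScalarTower k R M] {N : ℕ} {q qb : k} {K G E F : R}
  {κ0 : k} {a b : ℕ} {B : ℕ → ℕ → M} {al be al' be' : ℕ → ℕ → k} {co : ℕ → ℕ → M →ₗ[k] k}

theorem lw_eq (h : Alg k N q qb K G E F) {t : ℕ} (ht : 2 * t + 1 < a + b) :
    ((q ^ 2)⁻¹ ^ t * q ^ (a + b - 2)) * q = q ^ (a + b - 1 - 2 * t) := by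
  have q0 := h.q0
  rw [mul_assoc, ← pow_succ, inv_pow, ← pow_mul, inv_mul_eq_iff_eq_mul₀ (pow_ne_zero _ q0),
    ← pow_add]
  congr 1; omega

set_option maxHeartbeats 1000000 in
theorem Grid.good [CharZero k] (h : Alg k N q qb K G E F)
    (g : Grid k q qb κ0 K G E F a b B al be al' be' co)
    (ha : Odd a) (hb : Odd b) (haN : a < N) (hbN : b < N) :
    Good (LinearMap.id : M →ₗ[R] M) := by
  have fin := g.fin
  obtain ⟨a0, ha0⟩ := ha
  obtain ⟨b0, hb0⟩ := hb
  obtain ⟨N', hN'⟩ := h.N4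
  obtain ⟨H, hH⟩ : ∃ H, H = a + b - N := ⟨_, rfl⟩
  obtain ⟨μ, hμ⟩ : ∃ μ, μ = min a b := ⟨_, rfl⟩
  choose! w w1 w2 w3 using fun (t : ℕ) (ht : t < a ∧ t < b) => g.low_ex ht.1 ht.2
  have hwt : ∀ t, t < μ → Wt K G (qb ^ t * κ0) ((q ^ 2)⁻¹ ^ t * q ^ (a + b - 2)) (w t) :=
    fun t ht => g.lv_wt (w1 t (by omega))
  -- singles
  have S0 : ∀ t, H ≤ t → t < μ → a + b - 1 - 2 * t < N := by intro t _ _; omega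
  have SE : ∀ t, H ≤ t → t < μ → E ^ (a + b - 1 - 2 * t) • w t = 0 := by
    intro t h1 h2
    have hl := lw_eq (a := a) (b := b) h (t := t) (by omega)
    apply g.injF (l := t + (a + b - 1 - 2 * t)) (by omega) (g.lvEp (w1 t (by omega)) _)
    obtain ⟨d, hd⟩ : ∃ d, a + b - 1 - 2 * t = d + 1 := ⟨a + b - 2 - 2 * t, by omega⟩
    rw [hd] at hl ⊢
    rw [h.FEp (hwt t h2), w3 t (by omega), smul_zero, smul_zero, h.cc_zero _ _ hl.symm, zero_smul,
      zero_add]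
  -- lower ones
  have hy : ∀ t, 2 * t + 1 < H → ∃ y, Lv co (H - 1 - t) y ∧ F • y = E ^ (H - 1 - 2 * t - 1) • w t := by
    intro t ht
    have := g.surj (l := t + (H - 1 - 2 * t - 1)) (by omega)
      (g.lvEp (w1 t (by omega)) (H - 1 - 2 * t - 1))
    have e : t + (H - 1 - 2 * t - 1) + 1 = H - 1 - t := by omega
    rwa [e] at this
  choose! y y1 y2 using hy
  have PD : ∀ t, 2 * t + 1 < H → Alg.PData k q qb K G E F (qb ^ t * κ0)
      ((q ^ 2)⁻¹ ^ t * q ^ (a + b - 2)) (w t) (y t) (H - 1 - 2 * t) := by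
    intro t ht
    have e : H - 1 - t = (H - 1 - 2 * t) + t := by omega
    refine ⟨hwt t (by omega), ?_, w3 t (by omega), y2 t ht,
      g.injEp _ (by omega) (w1 t (by omega)) (w2 t (by omega)), ?_⟩
    · rw [lw_eq h (by omega)]
      have : a + b - 1 - 2 * t = N + (H - 1 - 2 * t) := by omega
      rw [this, pow_add, h.prim.pow_eq_one, one_mul]
    · have := g.lv_wt (y1 t ht)
      rw [e, pow_add qb, pow_add (q ^ 2)⁻¹, mul_assoc, mul_assoc] at this
      exact this
  have p0 : ∀ t, 2 * t + 1 < H → 0 < H - 1 - 2 * t := by intro t _; omega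
  have pN : ∀ t, 2 * t + 1 < H → H - 1 - 2 * t < N := by intro t _; omega
  have p2 : ∀ t, 2 * t + 1 < H → 2 * (H - 1 - 2 * t) ≠ N := by intro t _; omega
  let cU : ℕ → ℕ → M := fun t j => if j < H - 1 - 2 * t then E ^ j • w t
    else E ^ (j - (H - 1 - 2 * t)) • y t
  let cV : ℕ → ℕ → M := fun t j => if j < N - (H - 1 - 2 * t) then E ^ (j + (H - 1 - 2 * t)) • w t
    else E ^ j • y t
  let x : ℕ → ℕ → M := fun t => if H ≤ t then fun j => E ^ j • w t else
    if 2 * t + 1 < H then cU t else cV (H - 1 - t)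
  let len : ℕ → ℕ := fun t => if H ≤ t then a + b - 1 - 2 * t else N
  let Nt : ℕ → Submodule R M := fun t => if H ≤ t then Submodule.span R {w t} else
    if 2 * t + 1 < H then Submodule.span R {y t} else ⊥
  -- chains
  have hch : ∀ t, t < μ → Chain k F (x t) (len t) := by
    intro t ht
    by_cases h1 : H ≤ t
    · simp only [x, len, if_pos h1]
      exact h.chain_low (hwt t ht) (w3 t (by omega)) _ (lw_eq h (by omega)) (S0 t h1 ht)
    · by_cases h2 : 2 * t + 1 < H
      · simp only [x, len, if_neg h1, if_pos h2]
        exact h.chainU (PD t h2) (p0 t h2) (pN t h2)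
      · simp only [x, len, if_neg h1, if_neg h2]
        have h3 : 2 * (H - 1 - t) + 1 < H := by omega
        exact h.chainV (PD _ h3) (p0 _ h3) (pN _ h3)
  have hx0 : ∀ t, t < μ → Lv co t (x t 0) ∧ x t 0 ≠ 0 := by
    intro t ht
    by_cases h1 : H ≤ t
    · simp only [x, if_pos h1, pow_zero, one_smul]
      exact ⟨w1 t (by omega), w2 t (by omega)⟩
    · by_cases h2 : 2 * t + 1 < H
      · simp only [x, cU, if_neg h1, if_pos h2, if_pos (p0 t h2), pow_zero, one_smul]
        exact ⟨w1 t (by omega), w2 t (by omega)⟩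
      · have h3 : 2 * (H - 1 - t) + 1 < H := by omega
        have h4 : 0 < N - (H - 1 - 2 * (H - 1 - t)) := by have := pN _ h3; omega
        simp only [x, cV, if_neg h1, if_neg h2, if_pos h4, zero_add]
        refine ⟨?_, (PD _ h3).Ep⟩
        have := g.lvEp (w1 (H - 1 - t) (by omega)) (H - 1 - 2 * (H - 1 - t))
        have e : H - 1 - t + (H - 1 - 2 * (H - 1 - t)) = t := by omega
        rwa [e] at this
  have hmem : ∀ t, t < μ → ∀ j, x t j ∈ ⨆ i : Fin μ, Nt i := by
    intro t ht j
    have hle : ∀ s, s < μ → Nt s ≤ ⨆ i : Fin μ, Nt i := fun s hs =>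
      le_iSup (fun i : Fin μ => Nt i) ⟨s, hs⟩
    by_cases h1 : H ≤ t
    · apply hle t ht
      simp only [x, Nt, if_pos h1]
      exact Submodule.smul_mem _ _ (Submodule.mem_span_singleton_self _)
    · by_cases h2 : 2 * t + 1 < H
      · apply hle t ht
        simp only [x, Nt, if_neg h1, if_pos h2]
        exact h.chainU_mem (PD t h2) (p0 t h2) (pN t h2) j
      · have h3 : 2 * (H - 1 - t) + 1 < H := by omega
        have h5 : ¬ H ≤ H - 1 - t := by omega
        apply hle (H - 1 - t) (by omega)
        simp only [x, Nt, if_neg h1, if_neg h2, if_neg h5, if_pos h3]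
        exact h.chainV_mem (PD _ h3) (p0 _ h3) (pN _ h3) j
  have hfr : ∀ t, t < μ → Module.finrank k (Nt t) =
      if H ≤ t then a + b - 1 - 2 * t else if 2 * t + 1 < H then 2 * N else 0 := by
    intro t ht
    by_cases h1 : H ≤ t
    · have e : Nt t = Submodule.span R {w t} := if_pos h1
      rw [e, if_pos h1]
      exact h.low_finrank (hwt t ht) (w2 t (by omega)) (w3 t (by omega)) _ (by omega) (S0 t h1 ht)
        (lw_eq h (by omega)) (SE t h1 ht)
    · by_cases h2 : 2 * t + 1 < H
      · have e : Nt t = Submodule.span R {y t} := (if_neg h1).trans (if_pos h2)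
        rw [e, if_neg h1, if_pos h2]
        exact (h.proj_main (PD t h2) (p0 t h2) (pN t h2) (p2 t h2)).2
      · have e : Nt t = ⊥ := (if_neg h1).trans (if_neg h2)
        rw [e, if_neg h1, if_neg h2]
        exact Module.finrank_zero_of_subsingleton
  have hgood : ∀ t, t < μ → Good (LinearMap.id : Nt t →ₗ[R] Nt t) := by
    intro t ht
    by_cases h1 : H ≤ t
    · have e : Nt t = Submodule.span R {w t} := if_pos h1
      rw [e]
      have := h.low_simple (hwt t ht) (w2 t (by omega)) (w3 t (by omega)) _ (by omega) (S0 t h1 ht)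
        (lw_eq h (by omega)) (SE t h1 ht)
      exact Good.ss inferInstance
    · by_cases h2 : 2 * t + 1 < H
      · have e : Nt t = Submodule.span R {y t} := (if_neg h1).trans (if_pos h2)
        rw [e]
        exact Good.pr (h.proj_main (PD t h2) (p0 t h2) (pN t h2) (p2 t h2)).1
      · have e : Nt t = ⊥ := (if_neg h1).trans (if_neg h2)
        rw [e]
        exact Good.ss (ss_bot inferInstance)
  have hli := chain_li (k := k) (F := F) (ι := Fin μ) (fun t => len t) (fun t => x t)
    (fun t => hch t t.2) (g.lv_li _ (fun t => (hx0 t t.2).1) (fun t => (hx0 t t.2).2))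
  have hlen : ∑ t ∈ Finset.range (min a b), len t = a * b := by
    apply sum_lemma a b N len (by omega) (by omega)
    · intro t h1 h2
      simp only [len]; rw [if_pos (by omega)]
    · intro t h1
      simp only [len]; rw [if_neg (by omega), if_neg (by omega)]; ring
  have hcard : Fintype.card (Σ t : Fin μ, Fin (len t)) = Module.finrank k M := by
    rw [g.fr, ← hlen, Fintype.card_sigma, ← hμ, Finset.sum_range]
    simp
  have htop := hli.span_eq_top_of_card_eq_finrank' hcard
  apply good_of_family (k := k) (fun t : Fin μ => Nt t)
  · rw [← top_le_iff]
    intro v _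
    have hv : v ∈ (⊤ : Submodule k M) := trivial
    rw [← htop] at hv
    have : Submodule.span k (Set.range fun p : Σ t : Fin μ, Fin (len t) => x p.1 p.2) ≤
        (⨆ i : Fin μ, Nt i).restrictScalars k := by
      rw [Submodule.span_le]
      rintro _ ⟨p, rfl⟩
      exact hmem p.1 p.1.2 p.2
    exact this hv
  · rw [g.fr, ← Finset.sum_range (fun t => Module.finrank k (Nt t)),
      Finset.sum_congr rfl (fun t ht => hfr t (Finset.mem_range.1 ht)), hμ]
    apply sum_lemma a b N _ (by omega) (by omega)
    · intro t h1 h2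
      rw [if_pos (by omega)]
    · intro t h1
      beta_reduce
      split_ifs <;> omega
  · intro t
    exact hgood t t.2

end
end QFL

namespace QFL
set_option linter.unusedSectionVars false

section
variable {k R M : Type} [Field k] [Ring R] [Algebra k R] [AddCommGroup M] [Module k M]
  [Module R M] [IsScalarTower k R M] {N : ℕ} {q qb : k} {K G E F : R}

theorem exists_eig [IsAlgClosed k] [Module.Finite k M] (W : Submodule k M) {u : M} (hu : u ∈ W)
    (u0 : u ≠ 0) (T : R) (hT : ∀ v ∈ W, T • v ∈ W) :
    ∃ (c : k) (v : M), v ∈ W ∧ v ≠ 0 ∧ T • v = c • v := by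
  have : Nontrivial W := ⟨⟨⟨u, hu⟩, 0, fun h => u0 (congrArg Subtype.val h)⟩⟩
  let f : Module.End k W := (Algebra.lsmul k k M T).restrict hT
  obtain ⟨c, hc⟩ := Module.End.exists_eigenvalue f
  obtain ⟨v, hv⟩ := hc.exists_hasEigenvector
  refine ⟨c, v, v.2, fun h => hv.2 (Subtype.ext h), ?_⟩
  exact congrArg Subtype.val hv.apply_eq_smul

theorem Alg.exists_low [IsAlgClosed k] [Module.Finite k M] [hM : IsSimpleModule R M]
    (h : Alg k N q qb K G E F) (hG : G ^ (N / 2) = 1) :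
    ∃ (κ l : k) (w : M) (a : ℕ), Odd a ∧ a < N ∧ Wt K G κ l w ∧ w ≠ 0 ∧ F • w = 0 ∧
      l * q = q ^ a ∧ E ^ a • w = 0 ∧
      ∃ b : Module.Basis (Fin a) k M, ∀ j, b j = E ^ (j : ℕ) • w := by
  have hnt : Nontrivial M := IsSimpleModule.nontrivial R M
  obtain ⟨N', hN'⟩ := h.N4
  have hN0 := h.N0
  -- kernel of F
  obtain ⟨v0, v00, Fv0⟩ : ∃ v : M, v ≠ 0 ∧ F • v = 0 := by
    by_contra hcon
    push Not at hcon
    obtain ⟨v, hv⟩ := exists_ne (0 : M)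
    have : ∀ j : ℕ, F ^ j • v ≠ 0 := by
      intro j
      induction j with
      | zero => simpa using hv
      | succ j ih => rw [pow_succ', mul_smul]; exact hcon _ ih
    exact this N (by rw [h.FN, zero_smul])
  let W0 : Submodule k M := LinearMap.ker (Algebra.lsmul k k M F)
  have hW0 : ∀ v, v ∈ W0 ↔ F • v = 0 := fun v => LinearMap.mem_ker
  obtain ⟨κ, v1, v1m, v10, Kv1⟩ := exists_eig W0 ((hW0 v0).2 Fv0) v00 K (by
    intro v hv
    rw [hW0] at hv ⊢
    have e : F * K = qb • (K * F) := by rw [h.KF, smul_smul, mul_inv_cancel₀ h.qb0, one_smul]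
    rw [← mul_smul, e, smul_assoc, mul_smul, hv, smul_zero, smul_zero])
  let W1 : Submodule k M := W0 ⊓ LinearMap.ker (Algebra.lsmul k k M K - κ • LinearMap.id)
  have hW1 : ∀ v, v ∈ W1 ↔ F • v = 0 ∧ K • v = κ • v := by
    intro v
    simp only [W1, Submodule.mem_inf, hW0, LinearMap.mem_ker, LinearMap.sub_apply,
      LinearMap.smul_apply, LinearMap.id_apply, Algebra.lsmul_coe, sub_eq_zero]
  obtain ⟨l, w, wm, w0, Gw⟩ := exists_eig W1 ((hW1 v1).2 ⟨(hW0 v1).1 v1m, Kv1⟩) v10 G (by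
    intro v hv
    rw [hW1] at hv ⊢
    have q0 := h.q0
    have e : F * G = (q ^ 2)⁻¹ • (G * F) := by
      rw [h.GF, smul_smul, inv_mul_cancel₀ (pow_ne_zero _ q0), one_smul]
    constructor
    · rw [← mul_smul, e, smul_assoc, mul_smul, hv.1, smul_zero, smul_zero]
    · rw [← mul_smul, h.KG, mul_smul, hv.2, smul_comm])
  obtain ⟨Fw, Kw⟩ := (hW1 w).1 wm
  have hwt : Wt K G κ l w := ⟨Kw, Gw⟩
  have hl := eig_pow_one Gw w0 hG
  have hp2 : IsPrimitiveRoot (q ^ 2) (N / 2) :=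
    h.prim.pow hN0 (by omega)
  have : NeZero (N / 2) := ⟨by omega⟩
  obtain ⟨i, hi, hil⟩ := hp2.eq_pow_of_pow_eq_one hl
  have hlq : l * q = q ^ (2 * i + 1) := by rw [← hil, ← pow_mul, ← pow_succ]
  have haN : 2 * i + 1 < N := by omega
  have hEa : E ^ (2 * i + 1) • w = 0 := by
    by_contra hne
    have hF' : F • E ^ (2 * i + 1) • w = 0 := by
      rw [h.FEp hwt, Fw, smul_zero, smul_zero, h.cc_zero _ _ hlq.symm, zero_smul, zero_add]
    have hsp := h.low_span (h.wtEp hwt (2 * i + 1)) hF' N hN0 (by rw [h.EN, zero_smul])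
    have htop : Submodule.span R {E ^ (2 * i + 1) • w} = ⊤ := by
      rcases eq_bot_or_eq_top (Submodule.span R {E ^ (2 * i + 1) • w}) with h' | h'
      · exact absurd (Submodule.span_singleton_eq_bot.1 h') hne
      · exact h'
    rw [htop] at hsp
    have hex : ∃ m, E ^ m • w = 0 := ⟨N, by rw [h.EN, zero_smul]⟩
    classical
    obtain ⟨m, hm⟩ : ∃ m, m = Nat.find hex := ⟨_, rfl⟩
    have hm1 : E ^ m • w = 0 := hm ▸ Nat.find_spec hex
    have hm2 : ∀ j, j < m → E ^ j • w ≠ 0 := fun j hj => Nat.find_min hex (hm ▸ hj)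
    have m0 : 0 < m := by
      rcases Nat.eq_zero_or_pos m with h' | h'
      · rw [h'] at hm1; simp at hm1; exact absurd hm1 w0
      · exact h'
    apply hm2 (m - 1) (by omega)
    have : Submodule.span k (Set.range (fun j : Fin N => E ^ (j : ℕ) • E ^ (2 * i + 1) • w)) ≤
        LinearMap.ker (Algebra.lsmul k k M (E ^ (m - 1))) := by
      rw [Submodule.span_le]
      rintro _ ⟨j, rfl⟩
      simp only [SetLike.mem_coe, LinearMap.mem_ker, Algebra.lsmul_coe]
      rw [smul_smul, smul_smul, ← pow_add, ← pow_add]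
      obtain ⟨d, hd⟩ : ∃ d, m - 1 + j + (2 * i + 1) = d + m := ⟨j + 2 * i, by omega⟩
      rw [hd, pow_add, mul_smul, hm1, smul_zero]
    have hw : w ∈ Submodule.span k (Set.range
        (fun j : Fin N => E ^ (j : ℕ) • E ^ (2 * i + 1) • w)) := by
      rw [← hsp]; trivial
    exact LinearMap.mem_ker.1 (this hw)
  refine ⟨κ, l, w, 2 * i + 1, ⟨i, rfl⟩, haN, hwt, w0, Fw, hlq, hEa, ?_⟩
  have hsp := h.low_span hwt Fw (2 * i + 1) (by omega) hEa
  have htop : Submodule.span R {w} = ⊤ := by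
    rcases eq_bot_or_eq_top (Submodule.span R {w}) with h' | h'
    · exact absurd (Submodule.span_singleton_eq_bot.1 h') w0
    · exact h'
  rw [htop] at hsp
  refine ⟨Module.Basis.mk (h.low_li hwt w0 Fw _ haN hlq) (by rw [← hsp]; intro x _; trivial), ?_⟩
  intro j
  rw [Module.Basis.mk_apply]

end
end QFL

namespace QFL
set_option linter.unusedSectionVars false

section
variable {k R M M' : Type} [Field k] [Ring R] [Algebra k R] [AddCommGroup M] [Module k M]
  [Module R M] [IsScalarTower k R M] [AddCommGroup M'] [Module k M']
  [Module R M'] [IsScalarTower k R M'] {T : Type} [AddCommGroup T] [Module k T] [Module R T]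
  {N : ℕ} {q qb : k} {K G E F : R}

theorem Alg.Flow (h : Alg k N q qb K G E F) {κ l : k} {w : M} (hw : Wt K G κ l w)
    (Fw : F • w = 0) (r : ℕ) : F • E ^ r • w = cc q l r • E ^ (r - 1) • w := by
  cases r with
  | zero => simp [cc, Fw]
  | succ r => rw [h.FEp hw, Fw, smul_zero, smul_zero, zero_add, Nat.add_sub_cancel]

theorem pow_kill {w : M} {a r : ℕ} (hE : E ^ a • w = 0) (hr : ¬ r < a) : E ^ r • w = 0 := by
  obtain ⟨d, rfl⟩ : ∃ d, r = d + a := ⟨r - a, by omega⟩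
  rw [pow_add, mul_smul, hE, smul_zero]

theorem Alg.tensor_grid (h : Alg k N q qb K G E F) (e : M ⊗[k] M' ≃ₗ[k] T)
    (hK : ∀ (m : M) (m' : M'), K • e (m ⊗ₜ[k] m') = e ((K • m) ⊗ₜ[k] (K • m')))
    (hG : ∀ (m : M) (m' : M'), G • e (m ⊗ₜ[k] m') = e ((G • m) ⊗ₜ[k] (G • m')))
    {κ l κ' l' : k} {w : M} {w' : M'} {a b : ℕ} (a0 : 0 < a) (b0 : 0 < b) (haN : a < N)
    (hbN : b < N)
    (hw : Wt K G κ l w) (hw' : Wt K G κ' l' w') (Fw : F • w = 0) (Fw' : F • w' = 0)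
    (hl : l * q = q ^ a) (hl' : l' * q = q ^ b) (Ew : E ^ a • w = 0) (Ew' : E ^ b • w' = 0)
    (b1 : Module.Basis (Fin a) k M) (hb1 : ∀ j, b1 j = E ^ (j : ℕ) • w)
    (b2 : Module.Basis (Fin b) k M') (hb2 : ∀ j, b2 j = E ^ (j : ℕ) • w')
    (c d c' d' : ℕ → ℕ → k) (c0 : ∀ r s, c r s ≠ 0) (d0 : ∀ r s, d r s ≠ 0)
    (d'0 : ∀ r s, d' r s ≠ 0)
    (hF : ∀ r s, F • e ((E ^ r • w) ⊗ₜ[k] (E ^ s • w')) =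
      c r s • e ((F • E ^ r • w) ⊗ₜ[k] (E ^ s • w')) +
        d r s • e ((E ^ r • w) ⊗ₜ[k] (F • E ^ s • w')))
    (hE : ∀ r s, E • e ((E ^ r • w) ⊗ₜ[k] (E ^ s • w')) =
      c' r s • e ((E • E ^ r • w) ⊗ₜ[k] (E ^ s • w')) +
        d' r s • e ((E ^ r • w) ⊗ₜ[k] (E • E ^ s • w'))) :
    Grid k q qb (κ * κ') K G E F a b (fun r s => e ((E ^ r • w) ⊗ₜ[k] (E ^ s • w')))
      (fun r s => c r s * cc q l r) (fun r s => d r s * cc q l' s) c' d'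
      (fun r s => if hrs : r < a ∧ s < b then
        ((b1.tensorProduct b2).map e).coord (⟨r, hrs.1⟩, ⟨s, hrs.2⟩) else 0) := by
  have q0 := h.q0
  have hll : l * l' = q ^ (a + b - 2) := by
    have : l * l' * q ^ 2 = q ^ (a + b - 2) * q ^ 2 := by
      rw [← pow_add, show a + b - 2 + 2 = a + b by omega, pow_add, ← hl, ← hl']; ring
    exact mul_right_cancel₀ (pow_ne_zero 2 q0) this
  have hB0 : ∀ r s, ¬ (r < a ∧ s < b) → e ((E ^ r • w) ⊗ₜ[k] (E ^ s • w')) = 0 := by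
    intro r s hrs
    by_cases hr : r < a
    · rw [pow_kill Ew' (fun hs => hrs ⟨hr, hs⟩), TensorProduct.tmul_zero, map_zero]
    · rw [pow_kill Ew hr, TensorProduct.zero_tmul, map_zero]
  have hbB : ∀ (i : Fin a) (j : Fin b), ((b1.tensorProduct b2).map e) (i, j) =
      e ((E ^ (i : ℕ) • w) ⊗ₜ[k] (E ^ (j : ℕ) • w')) := by
    intro i j
    rw [Module.Basis.map_apply, Module.Basis.tensorProduct_apply, hb1, hb2]
  refine ⟨hB0, ?_, ?_, ?_, ?_, ?_, ?_, ?_, ?_, ?_, ?_, ?_, ?_, ?_⟩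
  · intro r s hrs; exact dif_neg hrs
  · intro r s r' s' hr hs
    beta_reduce
    rw [dif_pos ⟨hr, hs⟩]
    by_cases hrs : r' < a ∧ s' < b
    · rw [← hbB ⟨r', hrs.1⟩ ⟨s', hrs.2⟩, Module.Basis.coord_apply, Module.Basis.repr_self,
        Finsupp.single_apply]
      simp only [Prod.mk.injEq, Fin.mk.injEq]
    · rw [hB0 _ _ hrs, map_zero, if_neg]
      rintro ⟨rfl, rfl⟩
      exact hrs ⟨hr, hs⟩
  · intro v
    conv_lhs => rw [← ((b1.tensorProduct b2).map e).sum_repr v]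
    rw [Fintype.sum_prod_type, Finset.sum_range]
    apply Finset.sum_congr rfl
    intro i _
    rw [Finset.sum_range]
    apply Finset.sum_congr rfl
    intro j _
    rw [dif_pos ⟨i.2, j.2⟩, hbB]
    rfl
  · intro r s
    have h1 := h.wtEp hw r
    have h2 := h.wtEp hw' s
    constructor
    · rw [hK, h1.1, h2.1, TensorProduct.smul_tmul_smul, map_smul]
      congr 1; ring
    · rw [hG, h1.2, h2.2, TensorProduct.smul_tmul_smul, map_smul, ← hll]
      congr 1; ring
  · intro r s _ _
    beta_reduce
    rw [hF, h.Flow hw Fw, h.Flow hw' Fw', ← TensorProduct.smul_tmul', TensorProduct.tmul_smul (cc q l' s),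
      map_smul e (cc q l r), map_smul e (cc q l' s), smul_smul (c r s), smul_smul (d r s)]
  · intro r s _ _
    beta_reduce
    rw [hE, pow_succ', pow_succ', mul_smul, mul_smul]
  · intro s; simp [cc]
  · intro r; simp [cc]
  · intro r s hr hs r0
    refine mul_ne_zero (c0 _ _) (h.cc_ne _ _ (h.pow_ne_one r0 (by omega)) ?_)
    rw [hl]; intro e'; have := h.pow_inj (by omega) haN e'; omega
  · intro r s hr hs r0
    refine mul_ne_zero (d0 _ _) (h.cc_ne _ _ (h.pow_ne_one r0 (by omega)) ?_)
    rw [hl']; intro e'; have := h.pow_inj (by omega) hbN e'; omega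
  · intro r s _ _; exact d'0 _ _
  · exact Module.Finite.of_basis ((b1.tensorProduct b2).map e)
  · rw [Module.finrank_eq_card_basis ((b1.tensorProduct b2).map e)]; simp

end
end QFL

namespace QFL
set_option linter.unusedSectionVars false

section
variable {k R : Type} [Field k] [Ring R] [Algebra k R]
  {N : ℕ} {q qb : k} {K G E F : R}

theorem twist_pow {x e : R} {c : k} (h : x * e = c • (e * x)) (a : ℕ) :
    x * e ^ a = c ^ a • (e ^ a * x) := by
  induction a with
  | zero => simp
  | succ a ih =>
    rw [pow_succ, ← mul_assoc, ih, smul_mul_assoc, mul_assoc, h, mul_smul_comm, smul_smul, pow_succ,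
      mul_assoc]

theorem twist_mul {x y e : R} {c d : k} (h : x * e = c • (e * x)) (h' : y * e = d • (e * y)) :
    (x * y) * e = (c * d) • (e * (x * y)) := by
  rw [mul_assoc, h', mul_smul_comm, ← mul_assoc, h, smul_mul_assoc, smul_smul, mul_assoc, mul_comm]

theorem twist_inv {x x' e : R} {c : k} (c0 : c ≠ 0) (h : x * e = c • (e * x)) (h1 : x * x' = 1)
    (h2 : x' * x = 1) : x' * e = c⁻¹ • (e * x') := by
  have : e * x' = c • (x' * e) := by
    calc e * x' = x' * (x * e) * x' := by rw [← mul_assoc x', h2, one_mul]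
      _ = c • (x' * e) := by
        rw [h, mul_smul_comm, smul_mul_assoc, mul_assoc, mul_assoc, h1, mul_one]
  rw [this, smul_smul, inv_mul_cancel₀ c0, one_smul]

theorem twist_conj {x x' e : R} {c : k} (h : x * e * x' = c • e) 
    (h2 : x' * x = 1) : x * e = c • (e * x) := by
  rw [← smul_mul_assoc, ← h, mul_assoc, h2, mul_one]

theorem alg_of {n : ℕ} (n0 : 0 < n) (h4 : 4 ∣ n) {K Kh E F : R}
    (hq : IsPrimitiveRoot q (n ^ 2))
    (Kord : K ^ n = 1) (Khord : Kh ^ n = (K ^ (n - 1)) ^ 2) (KKh : K * Kh = Kh * K)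
    (KE : K * E * K ^ (n - 1) = q ^ n • E) (KF : K * F * K ^ (n - 1) = (q ^ n)⁻¹ • F)
    (KhE : Kh * E * Kh ^ (n ^ 2 - 1) = (q ^ n * (q ^ 2)⁻¹) • E)
    (KhF : Kh * F * Kh ^ (n ^ 2 - 1) = ((q ^ n)⁻¹ * q ^ 2) • F)
    (EN : E ^ n ^ 2 = 0) (FN : F ^ n ^ 2 = 0)
    (EF : F * E - q⁻¹ • (E * F) = 1 - K ^ (n - 1) * Kh)
    (gen : ∀ S : Subalgebra k R, K ∈ S → Kh ∈ S → E ∈ S → F ∈ S → S = ⊤) :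
    Alg k (n ^ 2) q (q ^ n) K (K ^ (n - 1) * Kh) E F ∧ (K ^ (n - 1) * Kh) ^ (n ^ 2 / 2) = 1 := by
  have hN0 : 0 < n ^ 2 := by positivity
  have q0 : q ≠ 0 := hq.ne_zero hN0.ne'
  have qn0 : q ^ n ≠ 0 := pow_ne_zero _ q0
  have q20 : q ^ 2 ≠ 0 := pow_ne_zero _ q0
  have k1 : K ^ (n - 1) * K = 1 := by rw [← pow_succ, Nat.sub_add_cancel n0, Kord]
  have k2 : K * K ^ (n - 1) = 1 := by rw [← pow_succ', Nat.sub_add_cancel n0, Kord]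
  have kp : (K ^ (n - 1)) ^ n = 1 := by rw [← pow_mul, mul_comm, pow_mul, Kord, one_pow]
  have hp : Kh ^ (n ^ 2) = 1 := by
    rw [sq, pow_mul, Khord, ← pow_mul, mul_comm, pow_mul, kp, one_pow]
  have h1 : Kh ^ (n ^ 2 - 1) * Kh = 1 := by rw [← pow_succ, Nat.sub_add_cancel hN0, hp]
  have cm : Commute (K ^ (n - 1)) Kh := Commute.pow_left (show Commute K Kh from KKh) _
  have hKE := twist_conj KE k1
  have hKF := twist_conj KF k1
  have hKhE := twist_conj KhE h1
  have hKhF := twist_conj KhF h1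
  have hG2 : (K ^ (n - 1) * Kh) ^ (n ^ 2 / 2) = 1 := by
    obtain ⟨m, rfl⟩ := h4
    have e : (4 * m) ^ 2 / 2 = (4 * m) * (2 * m) := by
      rw [show (4 * m) ^ 2 = (4 * m) * (2 * m) * 2 by ring, Nat.mul_div_cancel _ (by norm_num)]
    rw [e, cm.mul_pow, pow_mul, pow_mul Kh, kp, one_pow, one_mul, Khord, ← pow_mul,
      show 2 * (2 * m) = 4 * m by ring, kp]
  refine ⟨⟨hq, ?_, hN0, qn0, ?_, hKE, hKF, ?_, ?_, EN, FN, ?_, ?_, ?_, ?_⟩, hG2⟩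
  · exact Dvd.dvd.pow h4 (by norm_num)
  · rw [← mul_assoc, k2, mul_assoc, ← KKh, ← mul_assoc, k1]
  · have := twist_mul (twist_inv qn0 hKE k2 k1) hKhE
    rwa [inv_mul_cancel_left₀ qn0] at this
  · have := twist_mul (twist_inv (inv_ne_zero qn0) hKF k2 k1) hKhF
    rwa [inv_mul_cancel_left₀ (inv_ne_zero qn0)] at this
  · rw [sub_eq_iff_eq_add] at EF
    rw [EF]; abel
  · rw [sq, pow_mul, Kord, one_pow]
  · rw [cm.mul_pow, hp, sq, pow_mul, kp, one_pow, one_mul]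
  · intro S a b c d
    refine gen S a ?_ c d
    have := S.mul_mem a b
    rwa [← mul_assoc, k2, one_mul] at this

theorem Alg.finite (h : Alg k N q qb K G E F) : Module.Finite k R := by
  have N0 := h.N0
  let m : ℕ × ℕ × ℕ × ℕ → R := fun p => E ^ p.1 * F ^ p.2.1 * K ^ p.2.2.1 * G ^ p.2.2.2
  let W : Submodule k R := Submodule.span k (Set.range m)
  have hm : ∀ a b c d, E ^ a * F ^ b * K ^ c * G ^ d ∈ W := fun a b c d =>
    Submodule.subset_span ⟨(a, b, c, d), rfl⟩
  have cKG : Commute K G := h.KG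
  have hFE : ∀ a, ∃ x y : k, F * E ^ a = q⁻¹ ^ a • (E ^ a * F) + x • E ^ (a - 1) +
      y • (E ^ (a - 1) * G) := by
    intro a
    induction a with
    | zero => exact ⟨0, 0, by simp⟩
    | succ a ih =>
      obtain ⟨x, y, e⟩ := ih
      cases a with
      | zero => exact ⟨1, -1, by simp [h.FE]; abel⟩
      | succ a =>
        refine ⟨q⁻¹ ^ (a + 1) + x, - q⁻¹ ^ (a + 1) + y * (q ^ 2)⁻¹, ?_⟩
        rw [pow_succ E (a + 1), ← mul_assoc, e]
        simp only [Nat.add_sub_cancel, add_mul, smul_mul_assoc, mul_assoc, h.FE, h.GE]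
        simp only [mul_add, mul_sub, mul_smul_comm, mul_one, ← mul_assoc, ← pow_succ]
        module
  have hW : W = ⊤ := by
    rw [eq_top_iff]
    intro u _
    have key := h.stable (M := R) W ?_ ?_ ?_ ?_ u 1 (by simpa using hm 0 0 0 0)
    · simpa using key
    · apply stable_span
      rintro ⟨a, b, c, d⟩
      simp only [m, smul_eq_mul]
      have : K * (E ^ a * F ^ b * K ^ c * G ^ d) =
          (qb ^ a * qb⁻¹ ^ b) • (E ^ a * F ^ b * K ^ (c + 1) * G ^ d) := by
        rw [← mul_assoc, ← mul_assoc, ← mul_assoc, twist_pow h.KE, smul_mul_assoc, mul_assoc _ K,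
          twist_pow h.KF, mul_smul_comm, smul_smul, smul_mul_assoc, smul_mul_assoc, pow_succ']
        simp only [mul_assoc]
      rw [this]
      exact Submodule.smul_mem _ _ (hm _ _ _ _)
    · apply stable_span
      rintro ⟨a, b, c, d⟩
      simp only [m, smul_eq_mul]
      have : G * (E ^ a * F ^ b * K ^ c * G ^ d) =
          ((q ^ 2)⁻¹ ^ a * (q ^ 2) ^ b) • (E ^ a * F ^ b * K ^ c * G ^ (d + 1)) := by
        rw [← mul_assoc, ← mul_assoc, ← mul_assoc, twist_pow h.GE, smul_mul_assoc, mul_assoc _ G,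
          twist_pow h.GF, mul_smul_comm, smul_smul, smul_mul_assoc, smul_mul_assoc, pow_succ' G,
          mul_assoc, mul_assoc, mul_assoc, ← mul_assoc G, (cKG.symm.pow_right c).eq]
        simp only [mul_assoc]
      rw [this]
      exact Submodule.smul_mem _ _ (hm _ _ _ _)
    · apply stable_span
      rintro ⟨a, b, c, d⟩
      simp only [m, smul_eq_mul]
      rw [← mul_assoc, ← mul_assoc, ← mul_assoc, ← pow_succ']
      exact hm _ _ _ _
    · apply stable_span
      rintro ⟨a, b, c, d⟩
      simp only [m, smul_eq_mul]
      obtain ⟨x, y, e⟩ := hFE a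
      have : F * (E ^ a * F ^ b * K ^ c * G ^ d) =
          q⁻¹ ^ a • (E ^ a * F ^ (b + 1) * K ^ c * G ^ d) + x • (E ^ (a - 1) * F ^ b * K ^ c * G ^ d)
            + (y * (q ^ 2) ^ b) • (E ^ (a - 1) * F ^ b * K ^ c * G ^ (d + 1)) := by
        rw [← mul_assoc, ← mul_assoc, ← mul_assoc, e]
        simp only [add_mul, smul_mul_assoc]
        rw [mul_assoc _ G, twist_pow h.GF]
        simp only [mul_smul_comm, smul_mul_assoc, smul_smul]
        rw [pow_succ' F, pow_succ' G]
        have e2 : G * K ^ c = K ^ c * G := (cKG.symm.pow_right c).eq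
        congr 1
        · simp only [mul_assoc]
        · congr 1
          simp only [mul_assoc]
          rw [← mul_assoc G, e2, mul_assoc]
      rw [this]
      exact Submodule.add_mem _ (Submodule.add_mem _ (Submodule.smul_mem _ _ (hm _ _ _ _))
        (Submodule.smul_mem _ _ (hm _ _ _ _))) (Submodule.smul_mem _ _ (hm _ _ _ _))
  rw [Module.finite_def, ← hW]
  apply Submodule.fg_span
  have hsub : Set.range m ⊆ insert 0 (Set.range (fun p : Fin N × Fin N × Fin N × Fin N =>
      m (p.1, p.2.1, p.2.2.1, p.2.2.2))) := by
    rintro _ ⟨⟨a, b, c, d⟩, rfl⟩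
    by_cases ha : a < N
    · by_cases hb : b < N
      · right
        refine ⟨(⟨a, ha⟩, ⟨b, hb⟩, ⟨c % N, Nat.mod_lt _ N0⟩, ⟨d % N, Nat.mod_lt _ N0⟩), ?_⟩
        simp only [m]
        rw [← pow_eq_pow_mod c h.KN, ← pow_eq_pow_mod d h.GN]
      · left
        simp only [m]
        rw [pow_eq_zero_of_le (not_lt.1 hb) h.FN]; simp
    · left
      simp only [m]
      rw [pow_eq_zero_of_le (not_lt.1 ha) h.EN]; simp
  exact (Set.Finite.insert 0 (Set.finite_range _)).subset hsub

end
end QFL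

namespace QFL
set_option linter.unusedSectionVars false

section
variable {k : Type} [Field k] {n : ℕ} {q : k}

theorem U_gen (S : Subalgebra k (U k n q)) (h0 : K k n q ∈ S) (h1 : Kh k n q ∈ S)
    (h2 : E k n q ∈ S) (h3 : F k n q ∈ S) : S = ⊤ := by
  rw [eq_top_iff]
  intro x _
  obtain ⟨y, rfl⟩ := RingQuot.mkAlgHom_surjective k (Rel k n q) x
  induction y using FreeAlgebra.induction with
  | grade0 r => rw [AlgHom.commutes]; exact S.algebraMap_mem r
  | grade1 i => fin_cases i <;> assumption
  | mul a b ha hb => rw [map_mul]; exact S.mul_mem (ha trivial) (hb trivial)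
  | add a b ha hb => rw [map_add]; exact S.add_mem (ha trivial) (hb trivial)

theorem U_alg (hn : 0 < n) (h4 : 4 ∣ n) (hq : IsPrimitiveRoot q (n ^ 2)) :
    Alg k (n ^ 2) q (q ^ n) (K k n q) (Kinv k n q * Kh k n q) (E k n q) (F k n q) ∧
      (Kinv k n q * Kh k n q) ^ (n ^ 2 / 2) = 1 := by
  apply alg_of hn h4 hq
  · simpa [K] using RingQuot.mkAlgHom_rel k (Rel.Kord (k := k) (n := n) (q := q))
  · simpa [K, Kh] using RingQuot.mkAlgHom_rel k (Rel.Khord (k := k) (n := n) (q := q))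
  · simpa [K, Kh] using RingQuot.mkAlgHom_rel k (Rel.KKh (k := k) (n := n) (q := q))
  · simpa [K, E] using RingQuot.mkAlgHom_rel k (Rel.KE (k := k) (n := n) (q := q))
  · simpa [K, F] using RingQuot.mkAlgHom_rel k (Rel.KF (k := k) (n := n) (q := q))
  · simpa [Kh, E] using RingQuot.mkAlgHom_rel k (Rel.KhE (k := k) (n := n) (q := q))
  · simpa [Kh, F] using RingQuot.mkAlgHom_rel k (Rel.KhF (k := k) (n := n) (q := q))
  · simpa [E] using RingQuot.mkAlgHom_rel k (Rel.Enil (k := k) (n := n) (q := q))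
  · simpa [F] using RingQuot.mkAlgHom_rel k (Rel.Fnil (k := k) (n := n) (q := q))
  · simpa [K, Kh, E, F] using RingQuot.mkAlgHom_rel k (Rel.EF (k := k) (n := n) (q := q))
  · exact U_gen

theorem K_ord : K k n q ^ n = 1 := by
  simpa [K] using RingQuot.mkAlgHom_rel k (Rel.Kord (k := k) (n := n) (q := q))

variable {M : Type} [AddCommGroup M] [Module k M] [Module (U k n q) M] [IsScalarTower k (U k n q) M]

theorem oneIdem_act [CharZero k] (hn : 0 < n) (hq : IsPrimitiveRoot q (n ^ 2)) {κ : k}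
    (hκ : κ ^ n = 1) : ∃ ρ, ρ < n ∧ ∀ m : M, K k n q • m = κ • m → ∀ r, r < n →
      oneIdem k n q r • m = if r = ρ then m else 0 := by
  have hqb : IsPrimitiveRoot (q ^ n) n := hq.pow (by positivity) (sq n)
  have : NeZero n := ⟨hn.ne'⟩
  have hk : (n : k) ≠ 0 := by exact_mod_cast hn.ne'
  obtain ⟨ρ, hρ, rfl⟩ := hqb.eq_pow_of_pow_eq_one hκ
  refine ⟨ρ, hρ, fun m hm r hr => ?_⟩
  have key : oneIdem k n q r • m =
      ((n : k)⁻¹ * ∑ t ∈ Finset.range n, ((q ^ n) ^ (n - r + ρ)) ^ t) • m := by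
    rw [oneIdem, smul_assoc, Finset.sum_smul, mul_smul, Finset.sum_smul]
    congr 1
    apply Finset.sum_congr rfl
    intro t _
    rw [smul_assoc, eig_pow hm t, smul_smul]
    congr 1
    generalize q ^ n = Q
    ring
  rw [key]
  split_ifs with h
  · subst h
    have : (q ^ n) ^ (n - r + r) = 1 := by rw [Nat.sub_add_cancel hr.le, hqb.pow_eq_one]
    rw [this]
    simp [hk]
  · have hne : (q ^ n) ^ (n - r + ρ) ≠ 1 := by
      intro e
      have := hqb.dvd_of_pow_eq_one _ e
      obtain ⟨c, hc⟩ := this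
      have h1 : 0 < c := by
        rcases Nat.eq_zero_or_pos c with h' | h'
        · subst h'; omega
        · exact h'
      have h2 : c < 2 := by
        by_contra h'
        have : n * 2 ≤ n * c := Nat.mul_le_mul_left _ (by omega)
        omega
      have : c = 1 := by omega
      subst this
      omega
    have hs : ∑ t ∈ Finset.range n, ((q ^ n) ^ (n - r + ρ)) ^ t = 0 := by
      have := mul_geom_sum ((q ^ n) ^ (n - r + ρ)) n
      rw [← pow_mul (q ^ n) _ n, mul_comm _ n, pow_mul (q ^ n) n, hqb.pow_eq_one, one_pow,
        sub_self] at this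
      rcases mul_eq_zero.1 this with h' | h'
      · exact absurd (sub_eq_zero.1 h') hne
      · exact h'
    rw [hs]; simp

theorem wt_act [CharZero k] (hn : 0 < n) (hq : IsPrimitiveRoot q (n ^ 2)) {κ : k}
    (hκ : κ ^ n = 1) : ∃ (c c' : k), c ≠ 0 ∧
      (∀ m : M, K k n q • m = κ • m → flat k n q • m = c • m ∧
        Ring.inverse (flat k n q) • m = c' • m) ∧
      ((∀ m : M, K k n q • m = κ • m → oneIdem k n q 0 • m = m ∧
          (∑ r ∈ Finset.Icc 1 (n - 1), oneIdem k n q r) • m = 0) ∨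
       (∀ m : M, K k n q • m = κ • m → oneIdem k n q 0 • m = 0 ∧
          (∑ r ∈ Finset.Icc 1 (n - 1), oneIdem k n q r) • m = m)) := by
  classical
  have q0 : q ≠ 0 := hq.ne_zero (by positivity)
  obtain ⟨ρ, hρ, h⟩ := oneIdem_act (M := M) hn hq hκ
  have hc : q⁻¹ ^ ρ ≠ 0 := pow_ne_zero _ (inv_ne_zero q0)
  have hflat : ∀ m : M, K k n q • m = κ • m → flat k n q • m = q⁻¹ ^ ρ • m := by
    intro m hm
    rw [flat, Finset.sum_smul, Finset.sum_eq_single ρ]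
    · rw [smul_assoc, h m hm ρ hρ, if_pos rfl]
    · intro r hr hne
      rw [smul_assoc, h m hm r (Finset.mem_range.1 hr), if_neg hne, smul_zero]
    · intro h'; exact absurd (Finset.mem_range.2 hρ) h'
  refine ⟨q⁻¹ ^ ρ, if IsUnit (flat k n q) then (q⁻¹ ^ ρ)⁻¹ else 0, hc,
    fun m hm => ⟨hflat m hm, ?_⟩, ?_⟩
  · split_ifs with hu
    · have h1 : Ring.inverse (flat k n q) • flat k n q • m = m := by
        rw [← mul_smul, Ring.inverse_mul_cancel _ hu, one_smul]
      rw [hflat m hm, smul_comm] at h1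
      exact (eq_inv_smul_iff₀ hc).2 h1
    · rw [Ring.inverse_non_unit _ hu, zero_smul, zero_smul]
  · by_cases h0 : ρ = 0
    · left
      intro m hm
      refine ⟨by rw [h m hm 0 hn, if_pos h0.symm], ?_⟩
      rw [Finset.sum_smul]
      apply Finset.sum_eq_zero
      intro r hr
      rw [Finset.mem_Icc] at hr
      rw [h m hm r (by omega), if_neg (by omega)]
    · right
      intro m hm
      refine ⟨by rw [h m hm 0 hn, if_neg (Ne.symm h0)], ?_⟩
      rw [Finset.sum_smul, Finset.sum_eq_single ρ]
      · rw [h m hm ρ hρ, if_pos rfl]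
      · intro r hr hne
        rw [Finset.mem_Icc] at hr
        rw [h m hm r (by omega), if_neg hne]
      · intro h'
        exact absurd (Finset.mem_Icc.2 ⟨by omega, by omega⟩) h'

end
end QFL

namespace QFL
set_option linter.unusedSectionVars false

section
variable {k : Type} [Field k] {n : ℕ} {q : k}

/-- type synonym for the tensor product, with the action through `Δ`. -/
def TT (_ : U k n q →ₐ[k] (U k n q ⊗[k] U k n q)) (M N : Type) [AddCommGroup M] [Module k M]
    [AddCommGroup N] [Module k N] : Type := M ⊗[k] N

variable (Δ : U k n q →ₐ[k] (U k n q ⊗[k] U k n q))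
variable (M N : Type) [AddCommGroup M] [Module k M] [Module (U k n q) M]
    [IsScalarTower k (U k n q) M] [SMulCommClass (U k n q) k M]
    [AddCommGroup N] [Module k N] [Module (U k n q) N]
    [IsScalarTower k (U k n q) N] [SMulCommClass (U k n q) k N]
variable {M' N' : Type} [AddCommGroup M'] [Module k M'] [Module (U k n q) M']
    [IsScalarTower k (U k n q) M'] [SMulCommClass (U k n q) k M']
    [AddCommGroup N'] [Module k N'] [Module (U k n q) N']
    [IsScalarTower k (U k n q) N'] [SMulCommClass (U k n q) k N']

instance : AddCommGroup (TT Δ M N) := inferInstanceAs (AddCommGroup (M ⊗[k] N))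
instance : Module k (TT Δ M N) := inferInstanceAs (Module k (M ⊗[k] N))
instance : Module (U k n q) (TT Δ M N) := tensorModule k n q Δ M N

/-- the identification -/
def ttE : (M ⊗[k] N) ≃ₗ[k] TT Δ M N := LinearEquiv.refl k (M ⊗[k] N)

/-- action of `U ⊗ U` -/
def act : (U k n q ⊗[k] U k n q) →ₐ[k] Module.End k (M ⊗[k] N) :=
  (Module.endTensorEndAlgHom (R := k) (S := k) (A := k) (M := M) (N := N)).comp
      (Algebra.TensorProduct.map (Algebra.lsmul k k M) (Algebra.lsmul k k N))

theorem act_tmul (a b : U k n q) (m : M) (m' : N) :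
    act M N (a ⊗ₜ[k] b) (m ⊗ₜ[k] m') = (a • m) ⊗ₜ[k] (b • m') := rfl

theorem tt_smul (x : U k n q) (t : M ⊗[k] N) : x • ttE Δ M N t = ttE Δ M N (act M N (Δ x) t) := rfl

instance : IsScalarTower k (U k n q) (TT Δ M N) where
  smul_assoc c x t := by
    obtain ⟨t, rfl⟩ := (ttE Δ M N).surjective t
    rw [tt_smul, tt_smul, map_smul, map_smul, LinearMap.smul_apply, map_smul]

variable {M N}

theorem act_map (f : M →ₗ[U k n q] M') (g : N →ₗ[U k n q] N') (y : U k n q ⊗[k] U k n q)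
    (t : M ⊗[k] N) :
    TensorProduct.map (f.restrictScalars k) (g.restrictScalars k) (act M N y t) =
      act M' N' y (TensorProduct.map (f.restrictScalars k) (g.restrictScalars k) t) := by
  induction y with
  | zero => simp
  | add a b ha hb => rw [map_add, map_add, LinearMap.add_apply, LinearMap.add_apply, map_add, ha, hb]
  | tmul a b =>
    induction t with
    | zero => simp
    | add s t hs ht => rw [map_add, map_add, map_add, map_add, hs, ht]
    | tmul m m' =>
      rw [act_tmul, TensorProduct.map_tmul, TensorProduct.map_tmul, act_tmul]
      simp

/-- functoriality -/
def ttMap (f : M →ₗ[U k n q] M') (g : N →ₗ[U k n q] N') : TT Δ M N →ₗ[U k n q] TT Δ M' N' where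
  toFun t := ttE Δ M' N' (TensorProduct.map (f.restrictScalars k) (g.restrictScalars k)
    ((ttE Δ M N).symm t))
  map_add' a b := by rw [map_add, map_add, map_add]
  map_smul' x t := by
    obtain ⟨t, rfl⟩ := (ttE Δ M N).surjective t
    rw [tt_smul, LinearEquiv.symm_apply_apply, act_map, LinearEquiv.symm_apply_apply,
      RingHom.id_apply, tt_smul]

variable {Δ}

theorem tt_good_simple [IsAlgClosed k] [CharZero k] (hn : 0 < n) (h4 : 4 ∣ n)
    (hq : IsPrimitiveRoot q (n ^ 2)) (hΔ : IsComul k n q Δ)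
    [Module.Finite k M] [Module.Finite k N] [IsSimpleModule (U k n q) M]
    [IsSimpleModule (U k n q) N] : Good (LinearMap.id : TT Δ M N →ₗ[U k n q] TT Δ M N) := by
  obtain ⟨h, hG2⟩ := U_alg hn h4 hq
  obtain ⟨κ, l, w, a, oa, haN, hw, w0, Fw, hl, Ew, b1, hb1⟩ := h.exists_low (M := M) hG2
  obtain ⟨κ', l', w', b, ob, hbN, hw', w'0, Fw', hl', Ew', b2, hb2⟩ := h.exists_low (M := N) hG2
  obtain ⟨dK, dKh, dE, dF⟩ := hΔ
  have q0 := h.q0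
  have hqn : (q ^ n) ^ n = 1 := by rw [← pow_mul, ← sq]; exact hq.pow_eq_one
  have hκ : κ ^ n = 1 := eig_pow_one hw.1 w0 K_ord
  have hκ' : κ' ^ n = 1 := eig_pow_one hw'.1 w'0 K_ord
  have hκs : ∀ s, ((q ^ n) ^ s * κ) ^ n = 1 := by
    intro s; rw [mul_pow, hκ, mul_one, ← pow_mul, mul_comm s n, pow_mul, hqn, one_pow]
  have hκs' : ∀ s, ((q ^ n) ^ s * κ') ^ n = 1 := by
    intro s; rw [mul_pow, hκ', mul_one, ← pow_mul, mul_comm s n, pow_mul, hqn, one_pow]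
  have hκ0 : ∀ s, (q ^ n) ^ s * κ ≠ 0 := by
    intro s e; have := hκs s; rw [e, zero_pow hn.ne'] at this; exact zero_ne_one this
  have l0 : l ≠ 0 := by
    intro e; rw [e, zero_mul] at hl; exact pow_ne_zero a q0 hl.symm
  have hl0 : ∀ s : ℕ, (q ^ 2)⁻¹ ^ s * l ≠ 0 := fun s =>
    mul_ne_zero (pow_ne_zero _ (inv_ne_zero (pow_ne_zero _ q0))) l0
  -- Kh acts on weight vectors
  have hKh : ∀ (x y : k) (m : M), Wt (K k n q) (Kinv k n q * Kh k n q) x y m →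
      Kh k n q • m = (x * y) • m := by
    intro x y m hm
    have e : Kh k n q = K k n q * (Kinv k n q * Kh k n q) := by
      rw [← mul_assoc, Kinv, ← pow_succ', Nat.sub_add_cancel hn, K_ord, one_mul]
    rw [e, mul_smul, hm.2, smul_comm, hm.1, smul_smul, mul_comm]
  have hF : ∀ r s : ℕ, ∃ c d : k, c ≠ 0 ∧ d ≠ 0 ∧
      F k n q • ttE Δ M N ((E k n q ^ r • w) ⊗ₜ[k] (E k n q ^ s • w')) =
      c • ttE Δ M N ((F k n q • E k n q ^ r • w) ⊗ₜ[k] (E k n q ^ s • w')) +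
        d • ttE Δ M N ((E k n q ^ r • w) ⊗ₜ[k] (F k n q • E k n q ^ s • w')) := by
    intro r s
    have h1 := h.wtEp hw r
    have h2 := h.wtEp hw' s
    obtain ⟨c, c', c0, e1, e2⟩ := wt_act (M := N) hn hq (hκs' s)
    generalize E k n q ^ r • w = m at *
    generalize E k n q ^ s • w' = m' at *
    rw [tt_smul, dF]
    simp only [map_add, LinearMap.add_apply, act_tmul, mul_smul (F k n q), (e1 m' h2.1).1]
    rcases e2 with e2 | e2
    · refine ⟨c, ((q ^ n) ^ r * κ) * ((q ^ 2)⁻¹ ^ r * l), c0, mul_ne_zero (hκ0 r) (hl0 r), ?_⟩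
      rw [(e2 m' h2.1).1, (e2 m' h2.1).2, hKh _ _ _ h1, smul_zero, TensorProduct.tmul_zero, map_zero,
        add_zero, TensorProduct.tmul_smul c, ← TensorProduct.smul_tmul' (((q ^ n) ^ r * κ) * ((q ^ 2)⁻¹ ^ r * l))]
      simp only [LinearEquiv.map_smul]
    · refine ⟨c, ((q ^ 2)⁻¹ ^ r * l), c0, hl0 r, ?_⟩
      rw [(e2 m' h2.1).1, (e2 m' h2.1).2, h1.2, smul_zero, TensorProduct.tmul_zero, map_zero,
        add_zero, TensorProduct.tmul_smul c, ← TensorProduct.smul_tmul' ((q ^ 2)⁻¹ ^ r * l)]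
      simp only [LinearEquiv.map_smul]
  have hE : ∀ r s : ℕ, ∃ c d : k, d ≠ 0 ∧
      E k n q • ttE Δ M N ((E k n q ^ r • w) ⊗ₜ[k] (E k n q ^ s • w')) =
      c • ttE Δ M N ((E k n q • E k n q ^ r • w) ⊗ₜ[k] (E k n q ^ s • w')) +
        d • ttE Δ M N ((E k n q ^ r • w) ⊗ₜ[k] (E k n q • E k n q ^ s • w')) := by
    intro r s
    have h1 := h.wtEp hw r
    have h2 := h.wtEp hw' s
    have h3 := h.wtEp hw' (s + 1)
    obtain ⟨c, c', c0, e1, _⟩ := wt_act (M := N) hn hq (hκs' s)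
    obtain ⟨_, _, _, _, e2⟩ := wt_act (M := N) hn hq (hκs' (s + 1))
    rw [pow_succ' (E k n q) s, mul_smul] at h3
    generalize E k n q ^ r • w = m at *
    generalize E k n q ^ s • w' = m' at *
    rw [tt_smul, dE]
    simp only [map_add, LinearMap.add_apply, act_tmul, mul_smul, (e1 m' h2.1).2]
    rcases e2 with e2 | e2
    · refine ⟨c', ((q ^ n) ^ r * κ) ^ (n - 1), pow_ne_zero _ (hκ0 r), ?_⟩
      rw [(e2 _ h3.1).1, (e2 _ h3.1).2, TensorProduct.tmul_zero, map_zero, Kinv, eig_pow h1.1,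
        add_zero, TensorProduct.tmul_smul c', ← TensorProduct.smul_tmul' (((q ^ n) ^ r * κ) ^ (n - 1))]
      simp only [LinearEquiv.map_smul]
    · refine ⟨c', 1, one_ne_zero, ?_⟩
      rw [(e2 _ h3.1).1, (e2 _ h3.1).2, TensorProduct.tmul_zero, map_zero, one_smul, one_smul,
        add_zero, TensorProduct.tmul_smul c']
      simp only [LinearEquiv.map_smul]
  choose c d c0 d0 hF using hF
  choose c' d' d'0 hE using hE
  have hcK : ∀ (m : M) (m' : N), K k n q • ttE Δ M N (m ⊗ₜ[k] m') =
      ttE Δ M N ((K k n q • m) ⊗ₜ[k] (K k n q • m')) := by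
    intro m m'; rw [tt_smul, dK, act_tmul]
  have hcG : ∀ (m : M) (m' : N), (Kinv k n q * Kh k n q) • ttE Δ M N (m ⊗ₜ[k] m') =
      ttE Δ M N (((Kinv k n q * Kh k n q) • m) ⊗ₜ[k] ((Kinv k n q * Kh k n q) • m')) := by
    intro m m'
    rw [tt_smul, map_mul, Kinv, map_pow, dK, dKh, Algebra.TensorProduct.tmul_pow,
      Algebra.TensorProduct.tmul_mul_tmul, act_tmul]
  have g := h.tensor_grid (ttE Δ M N) hcK hcG oa.pos ob.pos haN hbN hw hw' Fw Fw' hl hl' Ew Ew'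
    b1 hb1 b2 hb2 c d c' d' c0 d0 d'0 hF hE
  exact g.good h oa ob haN hbN

end
end QFL

namespace QFL
set_option linter.unusedSectionVars false

section
variable {k : Type} [Field k] {n : ℕ} {q : k}
variable {Δ : U k n q →ₐ[k] (U k n q ⊗[k] U k n q)}
variable {M N : Type} [AddCommGroup M] [Module k M] [Module (U k n q) M]
    [IsScalarTower k (U k n q) M] [SMulCommClass (U k n q) k M]
    [AddCommGroup N] [Module k N] [Module (U k n q) N]
    [IsScalarTower k (U k n q) N] [SMulCommClass (U k n q) k N]

instance sub_comm (L : Submodule (U k n q) M) : SMulCommClass (U k n q) k L where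
  smul_comm a b m := by
    ext
    exact smul_comm a b (m : M)

theorem sub_fin [Module.Finite k M] (L : Submodule (U k n q) M) : Module.Finite k L :=
  Module.Finite.of_injective (L.subtype.restrictScalars k) L.injective_subtype

theorem ss_decomp [Module.Finite k M] [IsSemisimpleModule (U k n q) M] :
    ∃ (m : ℕ) (L : Fin m → Submodule (U k n q) M) (p : ∀ i, M →ₗ[U k n q] L i)
      (ι : ∀ i, L i →ₗ[U k n q] M), (∀ i, IsSimpleModule (U k n q) (L i)) ∧
      ∀ x, ∑ i, ι i (p i x) = x := by
  classical
  have : Module.Finite (U k n q) M := Module.Finite.of_restrictScalars_finite k (U k n q) M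
  obtain ⟨m, L, e, h⟩ := IsSemisimpleModule.exists_linearEquiv_fin_dfinsupp (U k n q) M
  refine ⟨m, L, fun i => (DFinsupp.lapply (R := U k n q) (M := fun i => L i) i).comp e.toLinearMap,
    fun i => e.symm.toLinearMap.comp (DFinsupp.lsingle (R := U k n q) (M := fun i => L i) i), h, fun x => ?_⟩
  apply e.injective
  ext i
  simp [DFinsupp.single_apply]

theorem tt_good_ss [IsAlgClosed k] [CharZero k] (hn : 0 < n) (h4 : 4 ∣ n)
    (hq : IsPrimitiveRoot q (n ^ 2)) (hΔ : IsComul k n q Δ)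
    [Module.Finite k M] [Module.Finite k N] [IsSemisimpleModule (U k n q) M]
    [IsSemisimpleModule (U k n q) N] : Good (LinearMap.id : TT Δ M N →ₗ[U k n q] TT Δ M N) := by
  obtain ⟨m, L, p, ι, hL, hs⟩ := ss_decomp (k := k) (n := n) (q := q) (M := M)
  obtain ⟨m', L', p', ι', hL', hs'⟩ := ss_decomp (k := k) (n := n) (q := q) (M := N)
  have e : (LinearMap.id : TT Δ M N →ₗ[U k n q] TT Δ M N) = ∑ i, ∑ j,
      ((ttMap (M := L i) (N := L' j) Δ (ι i) (ι' j)).comp LinearMap.id).comp (ttMap (M' := L i) (N' := L' j) Δ (p i) (p' j)) := by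
    ext t
    obtain ⟨t, rfl⟩ := (ttE Δ M N).surjective t
    rw [LinearMap.sum_apply]
    simp only [LinearMap.sum_apply, LinearMap.comp_apply, LinearMap.id_apply]
    induction t with
    | zero => simp
    | add s t hs ht =>
      simp only [map_add, Finset.sum_add_distrib]
      rw [← hs, ← ht]
    | tmul x y =>
      have : ∀ i j, ttMap (M := L i) (N := L' j) Δ (ι i) (ι' j) (ttMap (M' := L i) (N' := L' j) Δ (p i) (p' j) (ttE Δ M N (x ⊗ₜ[k] y))) =
        ttE Δ M N ((ι i (p i x)) ⊗ₜ[k] (ι' j (p' j y))) := fun i j => rfl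
      simp only [this]
      simp only [← map_sum, ← TensorProduct.tmul_sum, ← TensorProduct.sum_tmul, hs, hs']
  rw [e]
  refine Good.sum _ _ fun i _ => Good.sum _ _ fun j _ => Good.comp_right (Good.comp_left ?_ _) _
  have := sub_fin (L i)
  have := sub_fin (L' j)
  exact tt_good_simple hn h4 hq hΔ

end

section
variable {R A : Type} [Ring R] [AddCommGroup A] [Module R A]

theorem indec_end [IsArtinian R A] [IsNoetherian R A]
    (h : ∀ A₁ A₂ : Submodule R A, IsCompl A₁ A₂ → A₁ = ⊥ ∨ A₂ = ⊥) (f : Module.End R A) :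
    IsUnit f ∨ IsNilpotent f := by
  obtain ⟨m, hm⟩ := Filter.eventually_atTop.1 f.eventually_isCompl_ker_pow_range_pow
  have hc := hm (m + 1) (by omega)
  rcases h _ _ hc with e | e
  · left
    have inj : Function.Injective (f ^ (m + 1)) := LinearMap.ker_eq_bot.1 e
    have surj : Function.Surjective (f ^ (m + 1)) := by
      rw [e] at hc
      exact LinearMap.range_eq_top.1 (by simpa using hc.sup_eq_top)
    have : IsUnit (f ^ (m + 1)) := (Module.End.isUnit_iff _).2 ⟨inj, surj⟩
    exact (isUnit_pow_succ_iff).1 this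
  · right
    exact ⟨m + 1, LinearMap.range_eq_bot.1 e⟩

theorem indec_main [IsArtinian R A] [IsNoetherian R A] [Nontrivial A]
    (h : ∀ A₁ A₂ : Submodule R A, IsCompl A₁ A₂ → A₁ = ⊥ ∨ A₂ = ⊥)
    (g : Good (LinearMap.id : A →ₗ[R] A)) : IsSimpleModule R A ∨ Module.Projective R A := by
  obtain ⟨fT, fQ, e, hs, Q, _, _, hQ, i, p, rfl⟩ := g
  rcases indec_end h fT with hT | hT
  · left
    have := (Module.End.isUnit_iff _).1 hT
    rw [LinearMap.range_eq_top.2 this.2] at hs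
    have ss : IsSemisimpleModule R A :=
      IsSemisimpleModule.congr (Submodule.topEquiv (R := R) (M := A)).symm
    rw [isSimpleModule_iff]
    refine { eq_bot_or_eq_top := fun a => ?_ }
    obtain ⟨b, hb⟩ := exists_isCompl a
    rcases h a b hb with e | e
    · exact Or.inl e
    · right; rw [e] at hb; simpa using hb.sup_eq_top
  · right
    have hu : IsUnit (i.comp p : Module.End R A) := by
      have : (i.comp p : Module.End R A) = 1 - fT := by
        rw [eq_sub_iff_add_eq, add_comm]; exact e.symm
      rw [this]; exact hT.isUnit_one_sub
    obtain ⟨u, hu⟩ := hu.exists_left_inv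
    refine Module.Projective.of_split p (u.comp i) ?_
    exact hu

end

end QFL


open QFL in
/-- Proposition 4.6: every indecomposable direct summand of `S_{2i₁,j₁} ⊗ S_{2i₂,j₂}`
is either simple or projective.  (A direct summand is presented by a decomposition
`S ⊗ S ≅ A × B` of `u`-modules.) -/
theorem statement16 (k : Type) [Field k] [IsAlgClosed k] [CharZero k]
    (n : ℕ) (hn : 0 < n) (h4 : 4 ∣ n) (q : k) (hq : IsPrimitiveRoot q (n ^ 2))
    (Δ : U k n q →ₐ[k] (U k n q ⊗[k] U k n q)) (hΔ : IsComul k n q Δ) :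
    ∀ i₁ i₂ j₁ j₂ : ℕ, 1 ≤ i₁ → i₁ ≤ n ^ 2 / 2 → 1 ≤ i₂ → i₂ ≤ n ^ 2 / 2 →
      j₁ ≤ 1 → j₂ ≤ 1 →
      letI := tensorModule k n q Δ (S k n q i₁ j₁) (S k n q i₂ j₂)
      ∀ (A B : Type) (_ : AddCommGroup A) (_ : Module (U k n q) A)
        (_ : AddCommGroup B) (_ : Module (U k n q) B),
        Nonempty (((S k n q i₁ j₁) ⊗[k] (S k n q i₂ j₂)) ≃ₗ[U k n q] (A × B)) →
        Nontrivial A →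
        (∀ A₁ A₂ : Submodule (U k n q) A, IsCompl A₁ A₂ → A₁ = ⊥ ∨ A₂ = ⊥) →
        IsSimpleModule (U k n q) A ∨ Module.Projective (U k n q) A := by
  intro i₁ i₂ j₁ j₂ _ _ _ _ _ _ A B _ _ _ _ ⟨e⟩ _ hA
  have hss : ∀ i j, IsSemisimpleModule (U k n q) (S k n q i j) := by
    intro i j
    rw [S, sSup_eq_iSup]
    refine isSemisimpleModule_biSup_of_isSemisimpleModule_submodule fun N hN => ?_
    have := hN.2
    infer_instance
  have hfU : Module.Finite k (U k n q) := (U_alg hn h4 hq).1.finite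
  have hf : ∀ i j, Module.Finite k (S k n q i j) := fun i j => sub_fin _
  have := hss i₁ j₁
  have := hss i₂ j₂
  have := hf i₁ j₁
  have := hf i₂ j₂
  let T := TT Δ (S k n q i₁ j₁) (S k n q i₂ j₂)
  let e' : T ≃ₗ[U k n q] (A × B) := e
  have g : Good (LinearMap.id : T →ₗ[U k n q] T) := tt_good_ss hn h4 hq hΔ
  have hfT : Module.Finite k T := 
    inferInstanceAs (Module.Finite k ((S k n q i₁ j₁) ⊗[k] (S k n q i₂ j₂)))
  let π : T →ₗ[U k n q] A := (LinearMap.fst _ A B).comp e'.toLinearMap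
  let ι : A →ₗ[U k n q] T := e'.symm.toLinearMap.comp (LinearMap.inl _ A B)
  have hπι : π.comp ι = LinearMap.id := by ext x; simp [π, ι]
  have gA : Good (LinearMap.id : A →ₗ[U k n q] A) := by
    have := (g.comp_left π).comp_right ι
    rwa [LinearMap.comp_id, hπι] at this
  have hN : IsNoetherian (U k n q) T := isNoetherian_of_tower k inferInstance
  have hAr : IsArtinian (U k n q) T := isArtinian_of_tower k inferInstance
  have hsurj : Function.Surjective π := fun x => ⟨ι x, LinearMap.congr_fun hπι x⟩
  have := isNoetherian_of_surjective π (LinearMap.range_eq_top.2 hsurj)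
  have := isArtinian_of_surjective T π hsurj
  exact indec_main hA gA
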